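/- Let Y be a squared-Bessel process of dimension δ > 0 started at y ≥ 0, let α ≥ 0, γ > −α, and A_t = ∫_1^t s^γ Y_s^α ds. Let Ỹ be a squared-Bessel process of dimension δ started at 0. Then A_t / t^{1+γ+α} converges in distribution, as t → ∞, to ∫_0^1 s^γ Ỹ_s^α ds. -/

import Mathlib

open MeasureTheory Filter Set

/-- `Y` is a squared-Bessel process of dimension `δ` started at `y`, characterized via the
martingale problem: `Y_t - y - δ t` is a martingale with quadratic variation `4∫_0^t Y_s ds`. -/
structure IsBESQ {Ω : Type*} {m : MeasurableSpace Ω} (μ : Measure Ω)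
    (ℱ : Filtration ℝ m) (δ y : ℝ) (Y : ℝ → Ω → ℝ) : Prop where
  nonneg : ∀ t ω, 0 ≤ Y t ω
  cont : ∀ ω, Continuous fun t => Y t ω
  init : ∀ ω, Y 0 ω = y
  adapted : Adapted ℱ Y
  integrable_sq : ∀ t : ℝ, Integrable (fun ω => (Y t ω) ^ 2) μ
  mart : ∀ s t : ℝ, 0 ≤ s → s ≤ t →
    (μ[(fun ω => Y t ω - y - δ * t) | ℱ s]) =ᵐ[μ] fun ω => Y s ω - y - δ * s
  qv : ∀ s t : ℝ, 0 ≤ s → s ≤ t →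
    (μ[(fun ω => (Y t ω - y - δ * t) ^ 2 - 4 * ∫ u in (0:ℝ)..t, Y u ω) | ℱ s])
      =ᵐ[μ] fun ω => (Y s ω - y - δ * s) ^ 2 - 4 * ∫ u in (0:ℝ)..s, Y u ω

/-!
By Brownian scaling, `A_t / t ^ (1 + γ + α) = ∫_{1/t}^1 s ^ γ X_s ^ α ds`, where
`X_s = Y_{ts} / t` is a squared-Bessel process started at `y / t → 0`.

The martingale problem determines the one-step Laplace transform: along a fine subdivision, the
conditional mean of `exp (-κ X)` propagates, up to a third-order Taylor error, by the explicit
formula `besqLaplace`, whose semigroup property lets the errors be summed. Iterating, all mixed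
moments of the variables `exp (-X_s)` are explicit and continuous in the starting point. By Fubini
and the method of moments, `∫_ε^1 s ^ γ p (exp (-X_s)) ds` converges in distribution for every
polynomial `p` and every `ε > 0`.

Doob's `L²` maximal inequality on dyadic blocks gives `X_u ≤ ρ u ^ θ` for all `u ∈ (1/t, 1]` with
probability close to one, uniformly in `t`, for any `θ < 1`. On that event the integral over
`(1/t, ε]` is small as soon as `γ + θ α > -1`, and `x ^ α` is uniformly approximated by
`p (exp (-x))` on the range of `X`.
-/

open scoped NNReal Topology

section Doob

variable {Ω : Type*} {m : MeasurableSpace Ω} {μ : Measure Ω}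

/-- The filtration `i ↦ ℱ (φ i)` obtained from `ℱ` by the monotone change of index `φ`, used to
sample continuous-time processes on grids and to rescale time. -/
def filtrationComp {ι κ : Type*} [Preorder ι] [Preorder κ] (ℱ : Filtration ι m) (φ : κ →o ι) :
    Filtration κ m where
  seq i := ℱ (φ i)
  mono' _ _ hij := ℱ.mono (φ.monotone hij)
  le' i := ℱ.le (φ i)

lemma submartingale_comp {ι κ : Type*} [Preorder ι] [Preorder κ] {ℱ : Filtration ι m}
    {X : ι → Ω → ℝ} (hX : Submartingale X ℱ μ) (φ : κ →o ι) :
    Submartingale (fun i ↦ X (φ i)) (filtrationComp ℱ φ) μ :=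
  ⟨fun i ↦ hX.stronglyMeasurable (φ i), fun _ _ hij ↦ hX.ae_le_condExp (φ.monotone hij),
    fun i ↦ hX.integrable (φ i)⟩

lemma integral_mul_eq_of_condExp_ae_eq [IsFiniteMeasure μ] {m₀ : MeasurableSpace Ω} (hm : m₀ ≤ m)
    {f g W : Ω → ℝ} (hW : StronglyMeasurable[m₀] W) (hf : Integrable f μ)
    (hWf : Integrable (fun ω ↦ W ω * f ω) μ) (hfg : μ[f | m₀] =ᵐ[μ] g) :
    ∫ ω, W ω * f ω ∂μ = ∫ ω, W ω * g ω ∂μ := by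
  rw [← integral_condExp (μ := μ) hm (f := fun ω ↦ W ω * f ω)]
  refine integral_congr_ae ((condExp_mul_of_stronglyMeasurable_left hW hWf hf).trans ?_)
  filter_upwards [hfg] with ω hω
  rw [Pi.mul_apply, hω]

lemma integral_mul_le_integral_mul_of_submartingale [IsFiniteMeasure μ] {ι : Type*} [Preorder ι]
    {ℱ : Filtration ι m} {X : ι → Ω → ℝ} (hX : Submartingale X ℱ μ)
    (hX2 : ∀ i, MemLp (X i) 2 μ) {i j : ι} (hij : i ≤ j) {W : Ω → ℝ}
    (hW : StronglyMeasurable[ℱ i] W) (hW0 : 0 ≤ W) (hW2 : MemLp W 2 μ) :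
    ∫ ω, W ω * X i ω ∂μ ≤ ∫ ω, W ω * X j ω ∂μ := by
  have hWX : ∀ k, Integrable (fun ω ↦ W ω * X k ω) μ := fun k ↦ hW2.integrable_mul (hX2 k)
  rw [← integral_condExp (μ := μ) (ℱ.le i) (f := fun ω ↦ W ω * X j ω)]
  refine integral_mono_ae (hWX i) integrable_condExp ?_
  filter_upwards [hX.ae_le_condExp hij,
    condExp_mul_of_stronglyMeasurable_left hW (hWX j) (hX.integrable j)] with ω hle hpull
  refine (mul_le_mul_of_nonneg_left hle (hW0 ω)).trans_eq ?_
  exact hpull.symm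

-- Summation by parts: the sum is the discrete stochastic integral of the running maximum.
lemma sq_partialSups_le (x : ℕ → ℝ) (n : ℕ) :
    partialSups x n ^ 2 ≤
      4 * x n ^ 2 - 4 * ∑ k ∈ Finset.range n, partialSups x k * (x (k + 1) - x k) := by
  have half : partialSups x n ^ 2 / 2 ≤
      partialSups x n * x n - ∑ k ∈ Finset.range n, partialSups x k * (x (k + 1) - x k) := by
    induction n with
    | zero =>
      simp only [partialSups_zero, Finset.range_zero, Finset.sum_empty]
      linarith [sq_nonneg (x 0)]
    | succ n ih =>
      rw [Finset.sum_range_succ, partialSups_add_one]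
      rcases le_total (x (n + 1)) (partialSups x n) with h | h
      · rw [sup_eq_left.2 h]
        linarith
      · rw [sup_eq_right.2 h]
        nlinarith [sq_nonneg (x (n + 1) - partialSups x n)]
  nlinarith [sq_nonneg (partialSups x n - 2 * x n)]

lemma stronglyMeasurable_partialSups {𝒢 : Filtration ℕ m} {X : ℕ → Ω → ℝ}
    (hX : StronglyAdapted 𝒢 X) (n : ℕ) : StronglyMeasurable[𝒢 n] (partialSups X n) := by
  induction n with
  | zero => simpa using hX 0
  | succ n ih =>
    rw [partialSups_add_one]
    exact @StronglyMeasurable.sup _ _ _ _ (𝒢 (n + 1)) _ _ _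
      (ih.mono (𝒢.mono n.le_succ)) (hX (n + 1))

lemma memLp_partialSups {X : ℕ → Ω → ℝ} {p : ENNReal} (hX : ∀ k, MemLp (X k) p μ) (n : ℕ) :
    MemLp (partialSups X n) p μ := by
  induction n with
  | zero => simpa using hX 0
  | succ n ih =>
    rw [partialSups_add_one]
    exact ih.sup (hX (n + 1))

theorem integral_sq_partialSups_le [IsFiniteMeasure μ] {𝒢 : Filtration ℕ m} {X : ℕ → Ω → ℝ}
    (hX : Submartingale X 𝒢 μ) (hX0 : 0 ≤ X) (hX2 : ∀ k, MemLp (X k) 2 μ) (n : ℕ) :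
    ∫ ω, partialSups X n ω ^ 2 ∂μ ≤ 4 * ∫ ω, X n ω ^ 2 ∂μ := by
  have hS2 : ∀ k, MemLp (partialSups X k) 2 μ := memLp_partialSups hX2
  have hS0 : ∀ k, 0 ≤ partialSups X k := fun k ↦ (hX0 k).trans (le_partialSups X k)
  have hmul : ∀ k l, Integrable (fun ω ↦ partialSups X k ω * X l ω) μ := fun k l ↦
    (hS2 k).integrable_mul (hX2 l)
  have hterm : ∀ k, Integrable (fun ω ↦ partialSups X k ω * (X (k + 1) ω - X k ω)) μ := fun k ↦
    (hS2 k).integrable_mul ((hX2 (k + 1)).sub (hX2 k))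
  have hsum : 0 ≤ ∑ k ∈ Finset.range n, ∫ ω, partialSups X k ω * (X (k + 1) ω - X k ω) ∂μ := by
    refine Finset.sum_nonneg fun k _ ↦ ?_
    simp_rw [mul_sub]
    rw [integral_sub (hmul k _) (hmul k _), sub_nonneg]
    exact integral_mul_le_integral_mul_of_submartingale hX hX2 k.le_succ
      (stronglyMeasurable_partialSups hX.stronglyAdapted k) (hS0 k) (hS2 k)
  calc ∫ ω, partialSups X n ω ^ 2 ∂μ
      ≤ ∫ ω, (4 * X n ω ^ 2 - 4 * ∑ k ∈ Finset.range n,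
          partialSups X k ω * (X (k + 1) ω - X k ω)) ∂μ := by
        refine integral_mono (hS2 n).integrable_sq (((hX2 n).integrable_sq.const_mul 4).sub
          ((integrable_finsetSum _ fun k _ ↦ hterm k).const_mul 4)) fun ω ↦ ?_
        simp only [Pi.partialSups_apply]
        exact sq_partialSups_le (fun k ↦ X k ω) n
    _ = 4 * ∫ ω, X n ω ^ 2 ∂μ - 4 * ∑ k ∈ Finset.range n,
          ∫ ω, partialSups X k ω * (X (k + 1) ω - X k ω) ∂μ := by
        rw [integral_sub ((hX2 n).integrable_sq.const_mul 4)
          ((integrable_finsetSum _ fun k _ ↦ hterm k).const_mul 4), integral_const_mul,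
          integral_const_mul, integral_finsetSum _ fun k _ ↦ hterm k]
    _ ≤ 4 * ∫ ω, X n ω ^ 2 ∂μ := by linarith

/-- The running maximum `ω ↦ sup_{s ≤ T} X_s(ω)` of a real-valued process; a real supremum, hence
only meaningful for paths bounded above on `Iic T`. -/
noncomputable def runningMax {ι : Type*} [Preorder ι] (X : ι → Ω → ℝ) (T : ι) (ω : Ω) : ℝ :=
  sSup ((fun s ↦ X s ω) '' Iic T)

variable {X : ℝ≥0 → Ω → ℝ}

lemma le_runningMax {ω : Ω} (hX : Continuous fun s ↦ X s ω) {s T : ℝ≥0} (hs : s ≤ T) :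
    X s ω ≤ runningMax X T ω := by
  have hcompact : IsCompact (Iic T) := by rw [← Icc_bot]; exact isCompact_Icc
  exact le_csSup (hcompact.bddAbove_image hX.continuousOn) (mem_image_of_mem _ hs)

lemma exists_eq_runningMax {ω : Ω} (hX : Continuous fun s ↦ X s ω) (T : ℝ≥0) :
    ∃ s ≤ T, X s ω = runningMax X T ω := by
  have hcompact : IsCompact (Iic T) := by rw [← Icc_bot]; exact isCompact_Icc
  exact (hcompact.image hX).sSup_mem (nonempty_Iic.image _)

lemma tendsto_partialSups_runningMax {ω : Ω} (hX : Continuous fun s ↦ X s ω) (T : ℝ≥0) :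
    Tendsto (fun n : ℕ ↦ partialSups (fun k : ℕ ↦ X (k * (T / (n + 1)))) (n + 1) ω) atTop
      (𝓝 (runningMax X T ω)) := by
  obtain ⟨s, hsT, hs⟩ := exists_eq_runningMax hX T
  have hsT' : (s : ℝ) / T ≤ 1 := div_le_one_of_le₀ (mod_cast hsT) T.2
  set k : ℕ → ℕ := fun n ↦ ⌊(s : ℝ) / T * (n + 1)⌋₊
  have hgrid : Tendsto (fun n : ℕ ↦ (k n : ℝ≥0) * (T / (n + 1))) atTop (𝓝 s) := by
    have hfloor := ((tendsto_nat_floor_mul_div_atTop (by positivity : 0 ≤ (s : ℝ) / T)).comp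
      (tendsto_atTop_add_const_right atTop 1 tendsto_natCast_atTop_atTop)).mul_const (T : ℝ)
    have hlim : (s : ℝ) / T * T = s :=
      div_mul_cancel_of_imp fun hT ↦ le_antisymm (hT ▸ NNReal.coe_le_coe.2 hsT) s.2
    rw [hlim] at hfloor
    rw [← NNReal.tendsto_coe]
    refine hfloor.congr fun n ↦ ?_
    simp [k, div_mul_eq_mul_div, mul_div_assoc]
  refine tendsto_of_tendsto_of_tendsto_of_le_of_le
    (hs ▸ (hX.tendsto s).comp hgrid) tendsto_const_nhds (fun n ↦ ?_) fun n ↦ ?_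
  · have hk : k n ≤ n + 1 := Nat.floor_le_of_le (by
      push_cast
      exact mul_le_of_le_one_left (by positivity) hsT')
    exact le_partialSups_of_le (fun k : ℕ ↦ X (k * (T / (n + 1)))) hk ω
  · simp only [Pi.partialSups_apply]
    refine partialSups_le _ _ _ fun j hj ↦ le_runningMax hX ?_
    have hj' : (j : ℝ≥0) ≤ n + 1 := mod_cast hj
    calc (j : ℝ≥0) * (T / (n + 1)) ≤ (n + 1) * (T / (n + 1)) := by gcongr
      _ = T := mul_div_cancel₀ T (by positivity)

theorem memLp_runningMax_and_integral_sq_le [IsFiniteMeasure μ] {ℱ : Filtration ℝ≥0 m}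
    (hX : Submartingale X ℱ μ) (hX0 : 0 ≤ X) (hXc : ∀ ω, Continuous fun s ↦ X s ω)
    (hX2 : ∀ s, MemLp (X s) 2 μ) (T : ℝ≥0) :
    MemLp (runningMax X T) 2 μ ∧ ∫ ω, runningMax X T ω ^ 2 ∂μ ≤ 4 * ∫ ω, X T ω ^ 2 ∂μ := by
  set P : ℕ → Ω → ℝ := fun n ↦ partialSups (fun k : ℕ ↦ X (k * (T / (n + 1)))) (n + 1)
  have hP2 : ∀ n, MemLp (P n) 2 μ := fun n ↦ memLp_partialSups (fun k ↦ hX2 _) (n + 1)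
  have hPint : ∀ n, ∫⁻ ω, ENNReal.ofReal (P n ω ^ 2) ∂μ ≤
      ENNReal.ofReal (4 * ∫ ω, X T ω ^ 2 ∂μ) := fun n ↦ by
    have hmono : Monotone fun k : ℕ ↦ (k : ℝ≥0) * (T / (n + 1)) := fun i j hij ↦ by
      dsimp only; gcongr
    have hdoob := integral_sq_partialSups_le (submartingale_comp hX ⟨_, hmono⟩)
      (fun k ↦ hX0 _) (fun k ↦ hX2 _) (n + 1)
    have hend : ((n + 1 : ℕ) : ℝ≥0) * (T / (n + 1)) = T := by
      push_cast
      exact mul_div_cancel₀ T (by positivity)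
    simp only [OrderHom.coe_mk, hend] at hdoob
    rw [← ofReal_integral_eq_lintegral_ofReal (hP2 n).integrable_sq
      (ae_of_all _ fun ω ↦ sq_nonneg _)]
    exact ENNReal.ofReal_le_ofReal hdoob
  have htendsto : ∀ ω, Tendsto (fun n ↦ P n ω) atTop (𝓝 (runningMax X T ω)) := fun ω ↦
    tendsto_partialSups_runningMax (hXc ω) T
  have hmeas : AEStronglyMeasurable (runningMax X T) μ :=
    aestronglyMeasurable_of_tendsto_ae atTop (fun n ↦ (hP2 n).1) (ae_of_all _ htendsto)
  have hfatou : ∫⁻ ω, ENNReal.ofReal (runningMax X T ω ^ 2) ∂μ ≤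
      ENNReal.ofReal (4 * ∫ ω, X T ω ^ 2 ∂μ) := by
    have hliminf : ∀ ω, liminf (fun n ↦ ENNReal.ofReal (P n ω ^ 2)) atTop =
        ENNReal.ofReal (runningMax X T ω ^ 2) := fun ω ↦
      (ENNReal.tendsto_ofReal ((htendsto ω).pow 2)).liminf_eq
    simp_rw [← hliminf]
    exact (lintegral_liminf_le' fun n ↦ ((hP2 n).1.aemeasurable.pow_const 2).ennreal_ofReal).trans
      (liminf_le_of_le (by isBoundedDefault) fun b hb ↦
        hb.exists.elim fun n hn ↦ hn.trans (hPint n))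
  have hnonneg : 0 ≤ᵐ[μ] fun ω ↦ runningMax X T ω ^ 2 := ae_of_all _ fun ω ↦ sq_nonneg _
  refine ⟨(memLp_two_iff_integrable_sq hmeas).2 ⟨hmeas.pow 2, ?_⟩, ?_⟩
  · exact (hasFiniteIntegral_iff_ofReal hnonneg).2 (hfatou.trans_lt ENNReal.ofReal_lt_top)
  · rw [integral_eq_lintegral_of_nonneg_ae hnonneg (hmeas.pow 2)]
    exact ENNReal.toReal_le_of_le_ofReal
      (mul_nonneg zero_le_four (integral_nonneg fun ω ↦ sq_nonneg _)) hfatou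

end Doob

namespace IsBESQ

variable {Ω : Type*} {m : MeasurableSpace Ω} {μ : Measure Ω} {ℱ : Filtration ℝ m} {δ y : ℝ}
  {Y : ℝ → Ω → ℝ}

section Moments

lemma measurable (hY : IsBESQ μ ℱ δ y Y) (t : ℝ) : Measurable (Y t) := hY.adapted.measurable

lemma stronglyMeasurable_of_le (hY : IsBESQ μ ℱ δ y Y) {s t : ℝ} (hst : s ≤ t) :
    StronglyMeasurable[ℱ t] (Y s) :=
  (hY.adapted.measurable_le hst).stronglyMeasurable

lemma measurable_uncurry (hY : IsBESQ μ ℱ δ y Y) : Measurable (Function.uncurry Y) :=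
  measurable_uncurry_of_continuous_of_measurable hY.cont hY.measurable

lemma memLp_two (hY : IsBESQ μ ℱ δ y Y) (t : ℝ) : MemLp (Y t) 2 μ :=
  (memLp_two_iff_integrable_sq (hY.measurable t).aestronglyMeasurable).2 (hY.integrable_sq t)

variable [IsProbabilityMeasure μ]

lemma start_nonneg (hY : IsBESQ μ ℱ δ y Y) : 0 ≤ y := by
  obtain ⟨ω⟩ : Nonempty Ω := nonempty_of_isProbabilityMeasure μ
  exact hY.init ω ▸ hY.nonneg 0 ω

lemma integrable (hY : IsBESQ μ ℱ δ y Y) (t : ℝ) : Integrable (Y t) μ :=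
  (hY.memLp_two t).integrable one_le_two

lemma condExp_ae_eq (hY : IsBESQ μ ℱ δ y Y) {s t : ℝ} (hs : 0 ≤ s) (hst : s ≤ t) :
    μ[Y t | ℱ s] =ᵐ[μ] fun ω ↦ Y s ω + δ * (t - s) := by
  have hsub : (fun ω ↦ Y t ω - y - δ * t) = Y t - fun _ ↦ y + δ * t := by
    ext ω
    simp [sub_sub]
  have hmart := hY.mart s t hs hst
  rw [hsub] at hmart
  filter_upwards [hmart, condExp_sub (hY.integrable t) (integrable_const (y + δ * t)) (ℱ s)]
    with ω hω hsubω
  rw [hω, Pi.sub_apply, condExp_const (ℱ.le s)] at hsubω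
  linarith

lemma integral_mul_eq (hY : IsBESQ μ ℱ δ y Y) {s t : ℝ} (hs : 0 ≤ s) (hst : s ≤ t) {W : Ω → ℝ}
    (hW : StronglyMeasurable[ℱ s] W) (hW2 : MemLp W 2 μ) :
    ∫ ω, W ω * Y t ω ∂μ = ∫ ω, W ω * Y s ω ∂μ + δ * (t - s) * ∫ ω, W ω ∂μ := by
  rw [integral_mul_eq_of_condExp_ae_eq (ℱ.le s) hW (hY.integrable t)
    (hW2.integrable_mul (hY.memLp_two t)) (hY.condExp_ae_eq hs hst)]
  have hWY : Integrable (fun ω ↦ W ω * Y s ω) μ := hW2.integrable_mul (hY.memLp_two s)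
  simp_rw [mul_add]
  rw [integral_add hWY ((hW2.integrable one_le_two).mul_const _), integral_mul_const,
    mul_comm (δ * (t - s))]

lemma integral_eq (hY : IsBESQ μ ℱ δ y Y) {t : ℝ} (ht : 0 ≤ t) :
    ∫ ω, Y t ω ∂μ = y + δ * t := by
  simpa [hY.init] using
    hY.integral_mul_eq le_rfl ht (W := fun _ ↦ 1) stronglyMeasurable_const (memLp_const _)

lemma dim_nonneg (hY : IsBESQ μ ℱ δ y Y) : 0 ≤ δ := by
  have hy := hY.start_nonneg
  by_contra! hδ
  have hmean := hY.integral_eq (t := (y + 1) / -δ) (div_nonneg (by linarith) (by linarith))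
  have hneg : y + δ * ((y + 1) / -δ) = -1 := by
    field_simp [hδ.ne]
    ring
  linarith [integral_nonneg (μ := μ) (f := Y ((y + 1) / -δ)) (hY.nonneg _)]

lemma submartingale (hY : IsBESQ μ ℱ δ y Y) :
    Submartingale (fun s : ℝ≥0 ↦ Y s) (filtrationComp ℱ ⟨_, NNReal.coe_mono⟩) μ := by
  refine ⟨fun s ↦ hY.stronglyMeasurable_of_le le_rfl, fun s t hst ↦ ?_, fun s ↦ hY.integrable s⟩
  filter_upwards [hY.condExp_ae_eq s.2 (NNReal.coe_le_coe.2 hst)] with ω hω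
  refine le_of_le_of_eq ?_ hω.symm
  have : 0 ≤ δ * ((t : ℝ) - s) :=
    mul_nonneg hY.dim_nonneg (sub_nonneg.2 (NNReal.coe_le_coe.2 hst))
  exact le_add_of_nonneg_right this

lemma integrable_prod (hY : IsBESQ μ ℱ δ y Y) {s t : ℝ} (hs : 0 ≤ s) :
    Integrable (Function.uncurry Y) ((volume.restrict (Ioc s t)).prod μ) := by
  rw [integrable_prod_iff hY.measurable_uncurry.aestronglyMeasurable]
  refine ⟨ae_of_all _ fun u ↦ hY.integrable u, ?_⟩
  have hmean : IntegrableOn (fun u ↦ y + δ * u) (Ioc s t) :=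
    (Continuous.integrableOn_Icc (by fun_prop)).mono_set Ioc_subset_Icc_self
  refine hmean.congr ?_
  filter_upwards [ae_restrict_mem measurableSet_Ioc] with u hu
  rw [← hY.integral_eq (hs.trans hu.1.le)]
  simp [abs_of_nonneg (hY.nonneg u _)]

lemma integrable_intervalIntegral (hY : IsBESQ μ ℱ δ y Y) {s t : ℝ} (hs : 0 ≤ s) (hst : s ≤ t) :
    Integrable (fun ω ↦ ∫ u in s..t, Y u ω) μ := by
  simp only [intervalIntegral.integral_of_le hst]
  exact (hY.integrable_prod hs).integral_prod_right

variable {s t C : ℝ} {W : Ω → ℝ}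

lemma integral_mul_intervalIntegral (hY : IsBESQ μ ℱ δ y Y) (hs : 0 ≤ s) (hst : s ≤ t)
    (hW : StronglyMeasurable[ℱ s] W) (hC : ∀ ω, |W ω| ≤ C) :
    ∫ ω, W ω * (∫ u in s..t, Y u ω) ∂μ =
      (t - s) * ∫ ω, W ω * Y s ω ∂μ + δ * (t - s) ^ 2 / 2 * ∫ ω, W ω ∂μ := by
  have hWm := hW.mono (ℱ.le s)
  have hW2 : MemLp W 2 μ := MemLp.of_bound hWm.aestronglyMeasurable C (ae_of_all _ hC)
  have hprod : Integrable (Function.uncurry fun (ω : Ω) (u : ℝ) ↦ W ω * Y u ω)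
      (μ.prod (volume.restrict (Ioc s t))) :=
    (hY.integrable_prod hs).swap.bdd_mul (f := fun p : Ω × ℝ ↦ W p.1)
      (hWm.comp_measurable measurable_fst).aestronglyMeasurable (ae_of_all _ fun p ↦ hC _)
  calc ∫ ω, W ω * (∫ u in s..t, Y u ω) ∂μ
      = ∫ u in Ioc s t, ∫ ω, W ω * Y u ω ∂μ := by
        simp_rw [← intervalIntegral.integral_const_mul, intervalIntegral.integral_of_le hst]
        exact integral_integral_swap hprod
    _ = ∫ u in s..t, (∫ ω, W ω * Y s ω ∂μ + δ * (∫ ω, W ω ∂μ) * (u - s)) := by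
        rw [intervalIntegral.integral_of_le hst]
        refine setIntegral_congr_fun measurableSet_Ioc fun u hu ↦ ?_
        rw [hY.integral_mul_eq hs hu.1.le hW hW2]
        ring
    _ = (t - s) * ∫ ω, W ω * Y s ω ∂μ + δ * (t - s) ^ 2 / 2 * ∫ ω, W ω ∂μ := by
        rw [intervalIntegral.integral_add (by simp)
          ((by fun_prop : Continuous _).intervalIntegrable _ _),
          intervalIntegral.integral_const, intervalIntegral.integral_const_mul,
          intervalIntegral.integral_comp_sub_right (fun u ↦ u), integral_id, smul_eq_mul]
        ring

lemma memLp_two_martingale (hY : IsBESQ μ ℱ δ y Y) (t : ℝ) :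
    MemLp (fun ω ↦ Y t ω - y - δ * t) 2 μ :=
  ((hY.memLp_two t).sub (memLp_const y)).sub (memLp_const (δ * t))

lemma integrable_mul_martingale_mul (hY : IsBESQ μ ℱ δ y Y) (hW : StronglyMeasurable W)
    (hC : ∀ ω, |W ω| ≤ C) (s t : ℝ) :
    Integrable (fun ω ↦ W ω * (Y s ω - y - δ * s) * (Y t ω - y - δ * t)) μ := by
  simpa only [mul_assoc, Pi.mul_apply] using
    ((hY.memLp_two_martingale s).integrable_mul (hY.memLp_two_martingale t)).bdd_mul
      hW.aestronglyMeasurable (ae_of_all _ hC)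

lemma integral_mul_martingale_mul (hY : IsBESQ μ ℱ δ y Y) (hs : 0 ≤ s) (hst : s ≤ t)
    (hW : StronglyMeasurable[ℱ s] W) (hC : ∀ ω, |W ω| ≤ C) :
    ∫ ω, W ω * (Y s ω - y - δ * s) * (Y t ω - y - δ * t) ∂μ =
      ∫ ω, W ω * (Y s ω - y - δ * s) * (Y s ω - y - δ * s) ∂μ := by
  refine integral_mul_eq_of_condExp_ae_eq (ℱ.le s) (hW.mul ?_)
    ((hY.memLp_two_martingale t).integrable one_le_two)
    (hY.integrable_mul_martingale_mul (hW.mono (ℱ.le s)) hC s t) (hY.mart s t hs hst)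
  exact ((hY.stronglyMeasurable_of_le le_rfl).sub stronglyMeasurable_const).sub
    stronglyMeasurable_const

lemma integral_mul_sq_martingale_sub (hY : IsBESQ μ ℱ δ y Y) (hs : 0 ≤ s) (hst : s ≤ t)
    (hW : StronglyMeasurable[ℱ s] W) (hC : ∀ ω, |W ω| ≤ C) :
    ∫ ω, W ω * (Y t ω - Y s ω - δ * (t - s)) ^ 2 ∂μ =
      4 * ∫ ω, W ω * (∫ u in s..t, Y u ω) ∂μ := by
  set M : ℝ → Ω → ℝ := fun t ω ↦ Y t ω - y - δ * t
  set I : ℝ → Ω → ℝ := fun t ω ↦ ∫ u in (0 : ℝ)..t, Y u ω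
  have hWm := hW.mono (ℱ.le s)
  have hmul {f : Ω → ℝ} (hf : Integrable f μ) : Integrable (fun ω ↦ W ω * f ω) μ :=
    hf.bdd_mul hWm.aestronglyMeasurable (ae_of_all _ hC)
  have hI : ∀ {t}, 0 ≤ t → Integrable (I t) μ := hY.integrable_intervalIntegral le_rfl
  have hQ : ∀ {t}, 0 ≤ t → Integrable (fun ω ↦ M t ω ^ 2 - 4 * I t ω) μ := fun ht ↦
    (hY.memLp_two_martingale _).integrable_sq.sub ((hI ht).const_mul 4)
  have hqv := integral_mul_eq_of_condExp_ae_eq (ℱ.le s) hW (hQ (hs.trans hst))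
    (hmul (hQ (hs.trans hst))) (hY.qv s t hs hst)
  have hcross : ∫ ω, W ω * M s ω * M t ω ∂μ = ∫ ω, W ω * M s ω * M s ω ∂μ :=
    hY.integral_mul_martingale_mul hs hst hW hC
  have hadd : ∀ ω, ∫ u in s..t, Y u ω = I t ω - I s ω := fun ω ↦
    (intervalIntegral.integral_interval_sub_left ((hY.cont ω).intervalIntegrable _ _)
      ((hY.cont ω).intervalIntegrable _ _)).symm
  have hsplit : ∀ ω, W ω * (Y t ω - Y s ω - δ * (t - s)) ^ 2 =
      (W ω * (M t ω ^ 2 - 4 * I t ω) - W ω * (M s ω ^ 2 - 4 * I s ω)) -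
        2 * (W ω * M s ω * M t ω - W ω * M s ω * M s ω) +
        4 * (W ω * ∫ u in s..t, Y u ω) := fun ω ↦ by
    rw [hadd]
    ring
  have hQt := hmul (hQ (hs.trans hst))
  have hQs := hmul (hQ hs)
  have hMM : ∀ t, Integrable (fun ω ↦ W ω * M s ω * M t ω) μ :=
    hY.integrable_mul_martingale_mul hWm hC s
  simp_rw [hsplit]
  rw [integral_add ((hQt.sub' hQs).sub' (((hMM t).sub' (hMM s)).const_mul 2))
    ((hmul (hY.integrable_intervalIntegral hs hst)).const_mul 4),
    integral_sub (hQt.sub' hQs) (((hMM t).sub' (hMM s)).const_mul 2), integral_sub hQt hQs,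
    integral_const_mul, integral_sub (hMM t) (hMM s), integral_const_mul, hcross, hqv]
  ring

lemma integral_mul_sq_sub (hY : IsBESQ μ ℱ δ y Y) (hs : 0 ≤ s) (hst : s ≤ t)
    (hW : StronglyMeasurable[ℱ s] W) (hC : ∀ ω, |W ω| ≤ C) :
    ∫ ω, W ω * (Y t ω - Y s ω) ^ 2 ∂μ =
      4 * (t - s) * ∫ ω, W ω * Y s ω ∂μ + (2 * δ + δ ^ 2) * (t - s) ^ 2 * ∫ ω, W ω ∂μ := by
  have hWm := (hW.mono (ℱ.le s)).aestronglyMeasurable (μ := μ)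
  have hW2 : MemLp W 2 μ := MemLp.of_bound hWm C (ae_of_all _ hC)
  have hmul {f : Ω → ℝ} (hf : Integrable f μ) : Integrable (fun ω ↦ W ω * f ω) μ :=
    hf.bdd_mul hWm (ae_of_all _ hC)
  have hD : Integrable (fun ω ↦ W ω * (Y t ω - Y s ω - δ * (t - s)) ^ 2) μ :=
    hmul (((hY.memLp_two t).sub (hY.memLp_two s)).sub (memLp_const _)).integrable_sq
  have hsplit : ∀ ω, W ω * (Y t ω - Y s ω) ^ 2 = W ω * (Y t ω - Y s ω - δ * (t - s)) ^ 2 +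
      2 * δ * (t - s) * (W ω * Y t ω - W ω * Y s ω) - (δ * (t - s)) ^ 2 * W ω := fun ω ↦ by
    ring
  have hincr := (hmul (hY.integrable t)).sub' (hmul (hY.integrable s))
  simp_rw [hsplit]
  rw [integral_sub (hD.fun_add (hincr.const_mul _)) ((hW2.integrable one_le_two).const_mul _),
    integral_add hD (hincr.const_mul _), integral_const_mul, integral_const_mul,
    integral_sub (hmul (hY.integrable t)) (hmul (hY.integrable s)),
    hY.integral_mul_eq hs hst hW hW2, hY.integral_mul_sq_martingale_sub hs hst hW hC,
    hY.integral_mul_intervalIntegral hs hst hW hC]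
  ring

lemma integral_sq_eq (hY : IsBESQ μ ℱ δ y Y) (ht : 0 ≤ t) :
    ∫ ω, Y t ω ^ 2 ∂μ = (y + δ * t) ^ 2 + 4 * y * t + 2 * δ * t ^ 2 := by
  have hincr := hY.integral_mul_sq_sub le_rfl ht (W := fun _ ↦ 1) stronglyMeasurable_const
    (fun _ ↦ abs_one.le)
  simp only [one_mul, sub_zero, hY.init, integral_const, probReal_univ, smul_eq_mul] at hincr
  have hsplit : ∀ ω, Y t ω ^ 2 = (Y t ω - y) ^ 2 + (2 * y * Y t ω - y ^ 2) := fun ω ↦ by ring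
  simp_rw [hsplit]
  have hincr2 : Integrable (fun ω ↦ (Y t ω - y) ^ 2) μ :=
    ((hY.memLp_two t).sub (memLp_const y)).integrable_sq
  rw [integral_add hincr2 (((hY.integrable t).const_mul _).sub' (integrable_const _)), hincr,
    integral_sub ((hY.integrable t).const_mul _) (integrable_const _), integral_const_mul,
    hY.integral_eq ht, integral_const, probReal_univ, one_smul]
  ring

lemma memLp_runningMax (hY : IsBESQ μ ℱ δ y Y) (T : ℝ≥0) :
    MemLp (runningMax (fun s : ℝ≥0 ↦ Y s) T) 2 μ :=
  (memLp_runningMax_and_integral_sq_le hY.submartingale (fun s ↦ hY.nonneg s)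
    (fun ω ↦ (hY.cont ω).comp NNReal.continuous_coe) (fun s ↦ hY.memLp_two s) T).1

lemma integral_sq_runningMax_le (hY : IsBESQ μ ℱ δ y Y) (T : ℝ≥0) :
    ∫ ω, runningMax (fun s : ℝ≥0 ↦ Y s) T ω ^ 2 ∂μ ≤
      4 * ((y + δ * T) ^ 2 + 4 * y * T + 2 * δ * T ^ 2) := by
  rw [← hY.integral_sq_eq T.coe_nonneg]
  exact (memLp_runningMax_and_integral_sq_le hY.submartingale (fun s ↦ hY.nonneg s)
    (fun ω ↦ (hY.cont ω).comp NNReal.continuous_coe) (fun s ↦ hY.memLp_two s) T).2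

end Moments

lemma le_runningMax (hY : IsBESQ μ ℱ δ y Y) (ω : Ω) {s : ℝ} {T : ℝ≥0} (hs : 0 ≤ s)
    (hsT : s ≤ T) : Y s ω ≤ runningMax (fun s : ℝ≥0 ↦ Y s) T ω :=
  _root_.le_runningMax (X := fun s : ℝ≥0 ↦ Y s) (s := ⟨s, hs⟩)
    ((hY.cont ω).comp NNReal.continuous_coe) hsT

end IsBESQ

section Grid

/-- The remainder `d² min(1, |d|)` of a second-order Taylor expansion: cubic for small increments
`d`, quadratic for large ones. -/
noncomputable def cubicRemainder (d : ℝ) : ℝ := d ^ 2 * min 1 |d|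

lemma cubicRemainder_nonneg (d : ℝ) : 0 ≤ cubicRemainder d := by
  unfold cubicRemainder
  positivity

lemma cubicRemainder_le_sq (d : ℝ) : cubicRemainder d ≤ d ^ 2 :=
  mul_le_of_le_one_right (sq_nonneg d) (min_le_left _ _)

lemma cubicRemainder_le_mul_sq {d ε : ℝ} (hd : |d| ≤ ε) : cubicRemainder d ≤ ε * d ^ 2 := by
  rw [mul_comm]
  exact mul_le_mul_of_nonneg_left ((min_le_right _ _).trans hd) (sq_nonneg d)

lemma cubicRemainder_mul_le {a : ℝ} (ha : 0 ≤ a) (d : ℝ) :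
    cubicRemainder (a * d) ≤ (a ^ 2 + a ^ 3) * cubicRemainder d := by
  have hmin : min 1 (a * |d|) ≤ (1 + a) * min 1 |d| := by
    rcases le_total 1 |d| with h | h
    · rw [min_eq_left h]
      exact (min_le_left _ _).trans (by linarith)
    · rw [min_eq_right h]
      exact (min_le_right _ _).trans (by nlinarith [abs_nonneg d])
  calc cubicRemainder (a * d) = (a * d) ^ 2 * min 1 (a * |d|) := by
        rw [cubicRemainder, abs_mul, abs_of_nonneg ha]
    _ ≤ (a * d) ^ 2 * ((1 + a) * min 1 |d|) := by gcongr
    _ = (a ^ 2 + a ^ 3) * cubicRemainder d := by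
        rw [cubicRemainder]
        ring

lemma measurable_cubicRemainder : Measurable cubicRemainder := by
  unfold cubicRemainder
  fun_prop

-- The first increment exceeding `ε` is bounded by `V`; all later ones are charged to `d k ^ 2`.
lemma sum_cubicRemainder_le {d : ℕ → ℝ} {ε V : ℝ} {n : ℕ} (hε : 0 ≤ ε)
    (hV : ∀ k < n, d k ^ 2 ≤ V) :
    ∑ k ∈ Finset.range n, cubicRemainder (d k) ≤
      ∑ k ∈ Finset.range n, (ε + if ∃ j < k, ε < |d j| then 1 else 0) * d k ^ 2 +
        if ∃ j < n, ε < |d j| then V else 0 := by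
  induction n with
  | zero => simp
  | succ n ih =>
    have ih := ih fun k hk ↦ hV k (hk.trans n.lt_succ_self)
    rw [Finset.sum_range_succ, Finset.sum_range_succ]
    simp only [Nat.exists_lt_succ_right]
    by_cases hbefore : ∃ j < n, ε < |d j|
    · simp only [hbefore, true_or, if_true] at ih ⊢
      linarith [cubicRemainder_le_sq (d n), mul_nonneg hε (sq_nonneg (d n))]
    · by_cases hn : ε < |d n|
      · simp only [hbefore, hn, or_true, if_true, if_false] at ih ⊢
        linarith [cubicRemainder_le_sq (d n), hV n n.lt_succ_self,
          mul_nonneg hε (sq_nonneg (d n))]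
      · simp only [hbefore, hn, or_false, if_false] at ih ⊢
        linarith [cubicRemainder_le_mul_sq (not_lt.1 hn)]

/-- The `k`-th point of the subdivision of `[s, t]` into `n` intervals of equal length. -/
noncomputable def gridPoint (s t : ℝ) (n k : ℕ) : ℝ := s + k * ((t - s) / n)

variable {s t : ℝ}

@[simp] lemma gridPoint_zero (s t : ℝ) (n : ℕ) : gridPoint s t n 0 = s := by simp [gridPoint]

lemma gridPoint_self (s t : ℝ) {n : ℕ} (hn : n ≠ 0) : gridPoint s t n n = t := by
  rw [gridPoint, mul_div_cancel₀ _ (Nat.cast_ne_zero.2 hn), add_sub_cancel]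

lemma gridPoint_succ_sub (s t : ℝ) (n k : ℕ) :
    gridPoint s t n (k + 1) - gridPoint s t n k = (t - s) / n := by
  rw [gridPoint, gridPoint]
  push_cast
  ring

lemma monotone_gridPoint (hst : s ≤ t) (n : ℕ) : Monotone (gridPoint s t n) := fun i j hij ↦ by
  have : 0 ≤ (t - s) / n := div_nonneg (sub_nonneg.2 hst) n.cast_nonneg
  unfold gridPoint
  gcongr

lemma gridPoint_mem_Icc (hst : s ≤ t) {n k : ℕ} (hk : k ≤ n) : gridPoint s t n k ∈ Icc s t := by
  refine ⟨(gridPoint_zero s t n).symm.trans_le (monotone_gridPoint hst n k.zero_le), ?_⟩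
  rcases eq_or_ne n 0 with rfl | hn
  · simpa [gridPoint] using hst
  · exact (monotone_gridPoint hst n hk).trans_eq (gridPoint_self s t hn)

lemma eventually_forall_abs_sub_gridPoint_le {x : ℝ → ℝ} (hx : Continuous x) (hst : s ≤ t)
    {ε : ℝ} (hε : 0 < ε) :
    ∀ᶠ n : ℕ in atTop, ∀ k < n, |x (gridPoint s t n (k + 1)) - x (gridPoint s t n k)| ≤ ε := by
  obtain ⟨η, hη, hclose⟩ := Metric.uniformContinuousOn_iff.1
    ((isCompact_Icc (a := s) (b := t)).uniformContinuousOn_of_continuous hx.continuousOn) ε hε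
  filter_upwards [(tendsto_const_div_atTop_nhds_zero_nat (t - s)).eventually_lt_const hη]
    with n hn k hk
  refine (hclose _ (gridPoint_mem_Icc hst hk) _ (gridPoint_mem_Icc hst hk.le) ?_).le
  rwa [Real.dist_eq, gridPoint_succ_sub,
    abs_of_nonneg (div_nonneg (sub_nonneg.2 hst) n.cast_nonneg)]

end Grid

section LargeIncrement

variable {Ω : Type*} {Y : ℝ → Ω → ℝ} {s t ε : ℝ}

/-- The event that one of the first `k` increments of `Y` along the subdivision of `[s, t]` into
`n` intervals exceeds `ε` in absolute value. -/
def largeIncrementSet (Y : ℝ → Ω → ℝ) (s t ε : ℝ) (n k : ℕ) : Set Ω :=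
  {ω | ∃ j < k, ε < |Y (gridPoint s t n (j + 1)) ω - Y (gridPoint s t n j) ω|}

lemma monotone_largeIncrementSet (Y : ℝ → Ω → ℝ) (s t ε : ℝ) (n : ℕ) :
    Monotone (largeIncrementSet Y s t ε n) :=
  fun _ _ hkl _ ⟨j, hj, hlarge⟩ ↦ ⟨j, hj.trans_le hkl, hlarge⟩

lemma measurableSet_largeIncrementSet {m : MeasurableSpace Ω} {ℱ : Filtration ℝ m}
    (hY : Adapted ℱ Y) (hst : s ≤ t) (ε : ℝ) (n k : ℕ) :
    MeasurableSet[ℱ (gridPoint s t n k)] (largeIncrementSet Y s t ε n k) := by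
  have hunion : largeIncrementSet Y s t ε n k =
      ⋃ j < k, {ω | ε < |Y (gridPoint s t n (j + 1)) ω - Y (gridPoint s t n j) ω|} := by
    ext ω
    simp [largeIncrementSet]
  have hmeas : ∀ i ≤ k, Measurable[ℱ (gridPoint s t n k)] (Y (gridPoint s t n i)) := fun i hi ↦
    hY.measurable_le (monotone_gridPoint hst n hi)
  rw [hunion]
  refine MeasurableSet.iUnion fun j ↦ MeasurableSet.iUnion fun hj ↦ ?_
  exact (measurable_abs.comp ((hmeas _ hj).sub (hmeas _ hj.le))) measurableSet_Ioi

lemma tendsto_integral_indicator_largeIncrementSet {m : MeasurableSpace Ω} {μ : Measure Ω}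
    (hY : ∀ t, Measurable (Y t)) (hYc : ∀ ω, Continuous fun t ↦ Y t ω) (hst : s ≤ t)
    (hε : 0 < ε) {f : Ω → ℝ} (hf : Integrable f μ) :
    Tendsto (fun n ↦ ∫ ω, (largeIncrementSet Y s t ε n n).indicator f ω ∂μ) atTop (𝓝 0) := by
  have hmeas : ∀ n, MeasurableSet (largeIncrementSet Y s t ε n n) := fun n ↦
    measurableSet_largeIncrementSet (ℱ := ⟨fun _ ↦ m, monotone_const, fun _ ↦ le_rfl⟩) hY hst ε n n
  rw [← integral_zero Ω ℝ]
  refine tendsto_integral_of_dominated_convergence (fun ω ↦ ‖f ω‖)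
    (fun n ↦ hf.1.indicator (hmeas n)) hf.norm
    (fun n ↦ ae_of_all _ fun ω ↦ norm_indicator_le_norm_self _ _) (ae_of_all _ fun ω ↦ ?_)
  refine tendsto_const_nhds.congr' ?_
  filter_upwards [eventually_forall_abs_sub_gridPoint_le (hYc ω) hst hε] with n hn
  refine (indicator_of_notMem (fun h ↦ ?_) _).symm
  obtain ⟨k, hk, hlarge⟩ := h
  exact (hn k hk).not_gt hlarge

/-- The weight `ε + 𝟙_B`, where `B` is the event that one of the first `k` increments exceeds `ε`;
it dominates the weight given to the `k`-th squared increment by `sum_cubicRemainder_le`. -/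
noncomputable def incrementWeight (Y : ℝ → Ω → ℝ) (s t ε : ℝ) (n k : ℕ) (ω : Ω) : ℝ :=
  ε + (largeIncrementSet Y s t ε n k).indicator 1 ω

lemma stronglyMeasurable_incrementWeight {m : MeasurableSpace Ω} {ℱ : Filtration ℝ m}
    (hY : Adapted ℱ Y) (hst : s ≤ t) (ε : ℝ) (n k : ℕ) :
    StronglyMeasurable[ℱ (gridPoint s t n k)] (incrementWeight Y s t ε n k) :=
  stronglyMeasurable_const.add (stronglyMeasurable_one.indicator
    (measurableSet_largeIncrementSet hY hst ε n k))

lemma incrementWeight_nonneg (Y : ℝ → Ω → ℝ) (s t : ℝ) (hε : 0 ≤ ε) (n k : ℕ) (ω : Ω) :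
    0 ≤ incrementWeight Y s t ε n k ω :=
  add_nonneg hε (indicator_nonneg (fun _ _ ↦ zero_le_one) ω)

lemma incrementWeight_le (Y : ℝ → Ω → ℝ) (s t ε : ℝ) (n k : ℕ) (ω : Ω) :
    incrementWeight Y s t ε n k ω ≤ ε + 1 :=
  add_le_add_right (indicator_le_self' (fun _ _ ↦ zero_le_one) ω) _

lemma monotone_incrementWeight (Y : ℝ → Ω → ℝ) (s t ε : ℝ) (n : ℕ) :
    Monotone (incrementWeight Y s t ε n) := fun _ _ hkl ω ↦
  add_le_add_right (indicator_le_indicator_of_subset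
    (monotone_largeIncrementSet Y s t ε n hkl) (fun _ ↦ zero_le_one) ω) _

end LargeIncrement

namespace IsBESQ

variable {Ω : Type*} {m : MeasurableSpace Ω} {μ : Measure Ω} {ℱ : Filtration ℝ m} {δ y : ℝ}
  {Y : ℝ → Ω → ℝ} {s t ε C c : ℝ} {W W' : Ω → ℝ} {T : ℝ≥0}

lemma sq_sub_le_sq_runningMax (hY : IsBESQ μ ℱ δ y Y) (hs : s ∈ Icc 0 (T : ℝ))
    (ht : t ∈ Icc 0 (T : ℝ)) (ω : Ω) :
    (Y t ω - Y s ω) ^ 2 ≤ runningMax (fun s : ℝ≥0 ↦ Y s) T ω ^ 2 := by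
  have hsT := hY.le_runningMax ω hs.1 hs.2
  have htT := hY.le_runningMax ω ht.1 ht.2
  refine sq_le_sq' ?_ ?_
  · linarith [hY.nonneg t ω]
  · linarith [hY.nonneg s ω]

lemma integrable_cubicRemainder_sub (hY : IsBESQ μ ℱ δ y Y) (s t : ℝ) :
    Integrable (fun ω ↦ cubicRemainder (Y t ω - Y s ω)) μ := by
  refine ((hY.memLp_two t).sub (hY.memLp_two s)).integrable_sq.mono'
    (measurable_cubicRemainder.comp ((hY.measurable t).sub
      (hY.measurable s))).aestronglyMeasurable (ae_of_all _ fun ω ↦ ?_)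
  rw [Real.norm_of_nonneg (cubicRemainder_nonneg _)]
  exact cubicRemainder_le_sq _

lemma integrable_incrementWeight_mul_sq (hY : IsBESQ μ ℱ δ y Y) (hst : s ≤ t) (hε : 0 ≤ ε)
    (n k : ℕ) :
    Integrable (fun ω ↦ incrementWeight Y s t ε n k ω *
      (Y (gridPoint s t n (k + 1)) ω - Y (gridPoint s t n k) ω) ^ 2) μ :=
  ((hY.memLp_two _).sub (hY.memLp_two _)).integrable_sq.bdd_mul
    ((stronglyMeasurable_incrementWeight hY.adapted hst ε n k).mono (ℱ.le _)).aestronglyMeasurable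
    (ae_of_all _ fun ω ↦ (abs_of_nonneg (incrementWeight_nonneg Y s t hε n k ω)).trans_le
      (incrementWeight_le Y s t ε n k ω))

variable [IsProbabilityMeasure μ]

lemma integral_mul_sq_sub_le (hY : IsBESQ μ ℱ δ y Y) (hs : 0 ≤ s) (hst : s ≤ t) (htT : t ≤ T)
    (htc : t - s ≤ c) (hW : StronglyMeasurable[ℱ s] W) (hW' : StronglyMeasurable W')
    (hW0 : 0 ≤ W) (hWW' : W ≤ W') (hC : ∀ ω, W' ω ≤ C) :
    ∫ ω, W ω * (Y t ω - Y s ω) ^ 2 ∂μ ≤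
      (t - s) * ∫ ω, W' ω * (4 * runningMax (fun s : ℝ≥0 ↦ Y s) T ω + (2 * δ + δ ^ 2) * c) ∂μ := by
  have hδ := hY.dim_nonneg
  have hWb : ∀ ω, |W ω| ≤ C := fun ω ↦
    (abs_of_nonneg (hW0 ω)).trans_le ((hWW' ω).trans (hC ω))
  have hW'b : ∀ ω, |W' ω| ≤ C := fun ω ↦
    (abs_of_nonneg ((hW0 ω).trans (hWW' ω))).trans_le (hC ω)
  have hWmul {f : Ω → ℝ} (hf : Integrable f μ) : Integrable (fun ω ↦ W ω * f ω) μ :=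
    hf.bdd_mul (hW.mono (ℱ.le s)).aestronglyMeasurable (ae_of_all _ hWb)
  have hW'mul {f : Ω → ℝ} (hf : Integrable f μ) : Integrable (fun ω ↦ W' ω * f ω) μ :=
    hf.bdd_mul hW'.aestronglyMeasurable (ae_of_all _ hW'b)
  have hWint : Integrable W μ := by simpa using hWmul (integrable_const 1)
  calc ∫ ω, W ω * (Y t ω - Y s ω) ^ 2 ∂μ
      = (t - s) * ∫ ω, W ω * (4 * Y s ω + (2 * δ + δ ^ 2) * (t - s)) ∂μ := by
        have hsplit : ∀ ω, W ω * (4 * Y s ω + (2 * δ + δ ^ 2) * (t - s)) =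
            4 * (W ω * Y s ω) + (2 * δ + δ ^ 2) * (t - s) * W ω := fun ω ↦ by ring
        simp_rw [hsplit]
        rw [hY.integral_mul_sq_sub hs hst hW hWb,
          integral_add ((hWmul (hY.integrable s)).const_mul 4) (hWint.const_mul _),
          integral_const_mul, integral_const_mul]
        ring
    _ ≤ (t - s) * ∫ ω, W' ω *
          (4 * runningMax (fun s : ℝ≥0 ↦ Y s) T ω + (2 * δ + δ ^ 2) * c) ∂μ := by
        refine mul_le_mul_of_nonneg_left (integral_mono
          (hWmul (((hY.integrable s).const_mul 4).fun_add (integrable_const _)))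
          (hW'mul ((((hY.memLp_runningMax T).integrable one_le_two).const_mul 4).fun_add
            (integrable_const _))) fun ω ↦ ?_) (sub_nonneg.2 hst)
        have hYs := hY.nonneg s ω
        have hW'ω := (hW0 ω).trans (hWW' ω)
        exact mul_le_mul (hWW' ω) (by gcongr; exact hY.le_runningMax ω hs (hst.trans htT))
          (by positivity) hW'ω

lemma integral_incrementWeight_mul_sq_le (hY : IsBESQ μ ℱ δ y Y) (hs : 0 ≤ s) (hst : s ≤ t)
    (htT : t ≤ T) (hε : 0 ≤ ε) {n k : ℕ} (hk : k < n) :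
    ∫ ω, incrementWeight Y s t ε n k ω *
        (Y (gridPoint s t n (k + 1)) ω - Y (gridPoint s t n k) ω) ^ 2 ∂μ ≤
      (t - s) / n * ∫ ω, incrementWeight Y s t ε n n ω *
        (4 * runningMax (fun s : ℝ≥0 ↦ Y s) T ω + (2 * δ + δ ^ 2) * (t - s)) ∂μ := by
  rw [← gridPoint_succ_sub s t n k]
  refine hY.integral_mul_sq_sub_le (hs.trans (gridPoint_mem_Icc hst hk.le).1)
    (monotone_gridPoint hst n k.le_succ) ((gridPoint_mem_Icc hst hk).2.trans htT) ?_
    (stronglyMeasurable_incrementWeight hY.adapted hst ε n k)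
    ((stronglyMeasurable_incrementWeight hY.adapted hst ε n n).mono (ℱ.le _))
    (incrementWeight_nonneg Y s t hε n k) (monotone_incrementWeight Y s t ε n hk.le)
    (incrementWeight_le Y s t ε n n)
  rw [gridPoint_succ_sub]
  exact div_le_self (sub_nonneg.2 hst) (mod_cast hk.bot_lt)

lemma sum_integral_cubicRemainder_le (hY : IsBESQ μ ℱ δ y Y) (hs : 0 ≤ s) (hst : s ≤ t)
    (htT : t ≤ T) (hε : 0 ≤ ε) {n : ℕ} (hn : n ≠ 0) :
    ∑ k ∈ Finset.range n,
        ∫ ω, cubicRemainder (Y (gridPoint s t n (k + 1)) ω - Y (gridPoint s t n k) ω) ∂μ ≤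
      (t - s) * ∫ ω, incrementWeight Y s t ε n n ω *
          (4 * runningMax (fun s : ℝ≥0 ↦ Y s) T ω + (2 * δ + δ ^ 2) * (t - s)) ∂μ +
        ∫ ω, (largeIncrementSet Y s t ε n n).indicator
          (fun ω ↦ runningMax (fun s : ℝ≥0 ↦ Y s) T ω ^ 2) ω ∂μ := by
  set d : ℕ → Ω → ℝ := fun k ω ↦ Y (gridPoint s t n (k + 1)) ω - Y (gridPoint s t n k) ω
  set S : Ω → ℝ := runningMax (fun s : ℝ≥0 ↦ Y s) T
  set A : ℕ → Ω → ℝ := incrementWeight Y s t ε n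
  have hgrid : ∀ k ≤ n, gridPoint s t n k ∈ Icc 0 (T : ℝ) := fun k hk ↦
    ⟨hs.trans (gridPoint_mem_Icc hst hk).1, (gridPoint_mem_Icc hst hk).2.trans htT⟩
  have hAd : ∀ k, Integrable (fun ω ↦ A k ω * d k ω ^ 2) μ :=
    hY.integrable_incrementWeight_mul_sq hst hε n
  have hS2 : Integrable ((largeIncrementSet Y s t ε n n).indicator fun ω ↦ S ω ^ 2) μ :=
    (hY.memLp_runningMax T).integrable_sq.indicator
      (ℱ.le _ _ (measurableSet_largeIncrementSet hY.adapted hst ε n n))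
  calc ∑ k ∈ Finset.range n, ∫ ω, cubicRemainder (d k ω) ∂μ
      = ∫ ω, ∑ k ∈ Finset.range n, cubicRemainder (d k ω) ∂μ :=
        (integral_finsetSum _ fun k _ ↦ hY.integrable_cubicRemainder_sub _ _).symm
    _ ≤ ∫ ω, (∑ k ∈ Finset.range n, A k ω * d k ω ^ 2 +
          (largeIncrementSet Y s t ε n n).indicator (fun ω ↦ S ω ^ 2) ω) ∂μ := by
        refine integral_mono (integrable_finsetSum _ fun k _ ↦
          hY.integrable_cubicRemainder_sub _ _) ((integrable_finsetSum _ fun k _ ↦ hAd k).fun_add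
            hS2) fun ω ↦ ?_
        simpa [A, incrementWeight, largeIncrementSet, indicator_apply] using
          sum_cubicRemainder_le (d := fun k ↦ d k ω) hε
            fun k hk ↦ hY.sq_sub_le_sq_runningMax (hgrid k hk.le) (hgrid _ hk) ω
    _ = ∑ k ∈ Finset.range n, ∫ ω, A k ω * d k ω ^ 2 ∂μ +
          ∫ ω, (largeIncrementSet Y s t ε n n).indicator (fun ω ↦ S ω ^ 2) ω ∂μ := by
        rw [integral_add (integrable_finsetSum _ fun k _ ↦ hAd k) hS2,
          integral_finsetSum _ fun k _ ↦ hAd k]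
    _ ≤ _ := by
        refine add_le_add_left ((Finset.sum_le_sum fun k hk ↦
          hY.integral_incrementWeight_mul_sq_le hs hst htT hε
            (Finset.mem_range.1 hk)).trans_eq ?_) _
        rw [Finset.sum_const, Finset.card_range, nsmul_eq_mul, ← mul_assoc,
          mul_div_cancel₀ _ (Nat.cast_ne_zero.2 hn)]

theorem tendsto_sum_integral_cubicRemainder (hY : IsBESQ μ ℱ δ y Y) (hs : 0 ≤ s) (hst : s ≤ t) :
    Tendsto (fun n : ℕ ↦ ∑ k ∈ Finset.range n,
      ∫ ω, cubicRemainder (Y (gridPoint s t n (k + 1)) ω - Y (gridPoint s t n k) ω) ∂μ)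
      atTop (𝓝 0) := by
  set S : Ω → ℝ := runningMax (fun s : ℝ≥0 ↦ Y s) ⟨t, hs.trans hst⟩
  set V : Ω → ℝ := fun ω ↦ 4 * S ω + (2 * δ + δ ^ 2) * (t - s)
  have hS : MemLp S 2 μ := hY.memLp_runningMax _
  have hV : Integrable V μ := ((hS.integrable one_le_two).const_mul 4).add (integrable_const _)
  have hlim : ∀ ε > 0, Tendsto (fun n ↦ (t - s) * ∫ ω,
        incrementWeight Y s t ε n n ω * V ω ∂μ +
      ∫ ω, (largeIncrementSet Y s t ε n n).indicator (fun ω ↦ S ω ^ 2) ω ∂μ)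
      atTop (𝓝 ((t - s) * (ε * ∫ ω, V ω ∂μ))) := fun ε hε ↦ by
    have hzero {f : Ω → ℝ} (hf : Integrable f μ) :=
      tendsto_integral_indicator_largeIncrementSet hY.measurable hY.cont hst hε hf
    have hsplit : ∀ n, ∫ ω, incrementWeight Y s t ε n n ω * V ω ∂μ =
        ε * ∫ ω, V ω ∂μ + ∫ ω, (largeIncrementSet Y s t ε n n).indicator V ω ∂μ := fun n ↦ by
      have hB : MeasurableSet (largeIncrementSet Y s t ε n n) :=
        ℱ.le _ _ (measurableSet_largeIncrementSet hY.adapted hst ε n n)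
      rw [← integral_const_mul, ← integral_add (hV.const_mul ε) (hV.indicator hB)]
      congr with ω
      by_cases hω : ω ∈ largeIncrementSet Y s t ε n n <;> simp [incrementWeight, hω, add_mul]
    simp_rw [hsplit]
    simpa using (((hzero hV).const_add (ε * ∫ ω, V ω ∂μ)).const_mul (t - s)).add
      (hzero hS.integrable_sq)
  refine tendsto_order.2 ⟨fun a ha ↦ Eventually.of_forall fun n ↦ ha.trans_le
    (Finset.sum_nonneg fun k _ ↦ integral_nonneg fun ω ↦ cubicRemainder_nonneg _), fun η hη ↦ ?_⟩
  have hsmall : Tendsto (fun ε ↦ (t - s) * (ε * ∫ ω, V ω ∂μ)) (𝓝[>] 0) (𝓝 0) := by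
    have : Continuous fun ε ↦ (t - s) * (ε * ∫ ω, V ω ∂μ) := by fun_prop
    simpa using (this.tendsto 0).mono_left nhdsWithin_le_nhds
  obtain ⟨ε, hεη, hε⟩ := ((hsmall.eventually_lt_const hη).and self_mem_nhdsWithin).exists
  filter_upwards [(hlim ε hε).eventually_lt_const hεη, eventually_ne_atTop 0]
    with n hn hn0
  exact (hY.sum_integral_cubicRemainder_le hs hst le_rfl (le_of_lt hε) hn0).trans_lt hn

end IsBESQ

section LaplaceKernel

lemma abs_exp_neg_sub_taylor_le {p q : ℝ} (hp : 0 ≤ p) (hq : 0 ≤ q) :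
    |Real.exp (-q) - Real.exp (-p) * (1 - (q - p) + (q - p) ^ 2 / 2)| ≤
      4 * cubicRemainder (q - p) := by
  set d := q - p
  have hexp_p : Real.exp (-p) ≤ 1 := Real.exp_le_one_iff.2 (neg_nonpos.2 hp)
  rw [cubicRemainder]
  rcases le_total |d| 1 with h | h
  · have htaylor : |Real.exp (-d) - (1 - d + d ^ 2 / 2)| ≤ 4 * |d| ^ 3 := by
      have hbound := Real.exp_bound (x := -d) (by rwa [abs_neg]) (n := 3) (by norm_num)
      norm_num [Finset.sum_range_succ, Nat.factorial, ← sub_eq_add_neg] at hbound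
      linarith [pow_nonneg (abs_nonneg d) 3]
    have hq_eq : Real.exp (-q) = Real.exp (-p) * Real.exp (-d) := by
      rw [← Real.exp_add]
      congr 1
      ring
    have hcube : d ^ 2 * |d| = |d| ^ 3 := by
      rw [← sq_abs]
      ring
    rw [hq_eq, ← mul_sub, abs_mul, abs_of_pos (Real.exp_pos _), min_eq_right h, hcube]
    exact (mul_le_of_le_one_left (abs_nonneg _) hexp_p).trans htaylor
  · have hd : 1 ≤ d ^ 2 := by rw [← sq_abs]; nlinarith
    have hquad : |1 - d + d ^ 2 / 2| ≤ 3 * d ^ 2 := by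
      rw [abs_le]
      constructor <;> nlinarith [sq_nonneg (d - 1), sq_nonneg (d + 1)]
    have hexp_q : |Real.exp (-q)| ≤ 1 := by
      rw [abs_of_pos (Real.exp_pos _)]
      exact Real.exp_le_one_iff.2 (neg_nonpos.2 hq)
    rw [min_eq_left h, mul_one]
    calc _ ≤ |Real.exp (-q)| + Real.exp (-p) * |1 - d + d ^ 2 / 2| := by
          rw [← abs_of_pos (Real.exp_pos (-p)), ← abs_mul, abs_of_pos (Real.exp_pos (-p))]
          exact abs_sub _ _
      _ ≤ 1 + 3 * d ^ 2 :=
          add_le_add hexp_q ((mul_le_of_le_one_left (abs_nonneg _) hexp_p).trans hquad)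
      _ ≤ 4 * d ^ 2 := by linarith

lemma exp_neg_mul_abs_exp_sub_le {p z : ℝ} (hp : 0 ≤ p) (hzp : z ≤ p) :
    Real.exp (-p) * |Real.exp z - 1 - z| ≤ z ^ 2 := by
  have hexp_p : Real.exp (-p) ≤ 1 := Real.exp_le_one_iff.2 (neg_nonpos.2 hp)
  have hpz : Real.exp (-p) * Real.exp z ≤ 1 := by
    rw [← Real.exp_add]
    exact Real.exp_le_one_iff.2 (by linarith)
  have hlower : 0 ≤ Real.exp z - 1 - z := by linarith [Real.add_one_le_exp z]
  -- `e⁻ᶻ ≥ 1 - z` bounds `eᶻ - 1` by `z eᶻ`.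
  have hupper : Real.exp z - 1 ≤ z * Real.exp z := by
    have := mul_le_mul_of_nonneg_right (Real.add_one_le_exp (-z)) (Real.exp_pos z).le
    rw [← Real.exp_add, neg_add_cancel, Real.exp_zero] at this
    linarith
  have hsecond : Real.exp z - 1 - z ≤ z * (Real.exp z - 1) := by linarith
  rw [abs_of_nonneg hlower]
  rcases le_total 0 z with hz | hz
  · calc Real.exp (-p) * (Real.exp z - 1 - z) ≤ Real.exp (-p) * (z * (z * Real.exp z)) := by
          gcongr
          exact hsecond.trans (by gcongr)
      _ = z ^ 2 * (Real.exp (-p) * Real.exp z) := by ring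
      _ ≤ z ^ 2 := mul_le_of_le_one_right (sq_nonneg z) hpz
  · calc Real.exp (-p) * (Real.exp z - 1 - z) ≤ Real.exp z - 1 - z :=
          mul_le_of_le_one_left hlower hexp_p
      _ ≤ z * z := hsecond.trans
          (mul_le_mul_of_nonpos_left (by linarith [Real.add_one_le_exp z]) hz)
      _ = z ^ 2 := (sq z).symm

/-- The Laplace transform `x ↦ E exp (-κ X_t)` of the squared-Bessel process `X` of dimension `δ`
started at `x`. -/
noncomputable def besqLaplace (δ κ t x : ℝ) : ℝ :=
  (1 + 2 * κ * t) ^ (-(δ / 2)) * Real.exp (-(κ * x / (1 + 2 * κ * t)))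

variable {δ κ r h t x x' : ℝ}

@[simp] lemma besqLaplace_zero (δ κ x : ℝ) : besqLaplace δ κ 0 x = Real.exp (-(κ * x)) := by
  simp [besqLaplace]

lemma besqLaplace_nonneg (hκ : 0 ≤ κ) (ht : 0 ≤ t) : 0 ≤ besqLaplace δ κ t x := by
  unfold besqLaplace
  positivity

lemma besqLaplace_le_one (hδ : 0 ≤ δ) (hκ : 0 ≤ κ) (ht : 0 ≤ t) (hx : 0 ≤ x) :
    besqLaplace δ κ t x ≤ 1 := by
  have hκt : 0 ≤ 2 * κ * t := by positivity
  refine mul_le_one₀ (Real.rpow_le_one_of_one_le_of_nonpos (by linarith) (by linarith))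
    (Real.exp_pos _).le (Real.exp_le_one_iff.2 (neg_nonpos.2 (by positivity)))

@[fun_prop] lemma continuous_besqLaplace (δ κ t : ℝ) : Continuous (besqLaplace δ κ t) := by
  unfold besqLaplace
  fun_prop

lemma besqLaplace_add (δ x : ℝ) (hκ : 0 ≤ κ) (hr : 0 ≤ r) (hh : 0 ≤ h) :
    besqLaplace δ κ (r + h) x =
      (1 + 2 * κ * r) ^ (-(δ / 2)) * besqLaplace δ (κ / (1 + 2 * κ * r)) h x := by
  have hD : 0 < 1 + 2 * κ * r := by positivity
  have hsplit : 1 + 2 * κ * (r + h) =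
      (1 + 2 * κ * r) * (1 + 2 * (κ / (1 + 2 * κ * r)) * h) := by
    field_simp
    ring
  rw [besqLaplace, besqLaplace, hsplit, Real.mul_rpow hD.le (by positivity), mul_assoc,
    div_mul_eq_mul_div, div_div]

lemma exists_besqLaplace_eq_exp_mul_exp (hδ : 0 ≤ δ) (hκ : 0 ≤ κ) (hh : 0 ≤ h) (hx : 0 ≤ x) :
    ∃ z, besqLaplace δ κ h x = Real.exp (-(κ * x)) * Real.exp z ∧ z ≤ κ * x ∧
      |z| ≤ 2 * κ * h * (κ * x + δ / 2) ∧
      |z - 2 * κ * h * (κ * x - δ / 2)| ≤ (2 * κ * h) ^ 2 * (κ * x + δ / 2) := by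
  have hθ : 0 ≤ 2 * κ * h := by positivity
  have hp : 0 ≤ κ * x := by positivity
  rw [besqLaplace]
  generalize 2 * κ * h = θ at *
  generalize κ * x = p at *
  have hpos : 0 < 1 + θ := by linarith
  set L := Real.log (1 + θ)
  set q := θ / (1 + θ)
  have hq0 : 0 ≤ q := by positivity
  have hq_le_one : q ≤ 1 := div_le_one_of_le₀ (by linarith) hpos.le
  have hq_le : q ≤ θ := div_le_self hθ (by linarith)
  have hq_ge : θ - θ ^ 2 ≤ q := by
    rw [le_div_iff₀ hpos]
    nlinarith [pow_nonneg hθ 3]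
  have hL_le : L ≤ θ := by linarith [Real.log_le_sub_one_of_pos hpos]
  have hL_ge : q ≤ L := by
    refine le_of_eq_of_le ?_ (Real.one_sub_inv_le_log_of_pos hpos)
    simp only [q]
    field_simp
    ring
  have hpq0 := mul_nonneg hp hq0
  have hpq_le := mul_le_mul_of_nonneg_left hq_le hp
  have hpq_ge := mul_le_mul_of_nonneg_left hq_ge hp
  have hδL_le := mul_le_mul_of_nonneg_left hL_le hδ
  have hδL_ge := mul_le_mul_of_nonneg_left (hq_ge.trans hL_ge) hδ
  have hδL0 := mul_nonneg hδ (hq0.trans hL_ge)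
  refine ⟨p * q - δ / 2 * L, ?_, ?_, ?_, ?_⟩
  · rw [Real.rpow_def_of_pos hpos, ← Real.exp_add, ← Real.exp_add]
    congr 1
    simp only [q]
    field_simp
    ring
  · linarith [mul_le_of_le_one_right hp hq_le_one]
  all_goals
    rw [abs_le]
    constructor <;> nlinarith

lemma abs_besqLaplace_sub_le (hδ : 0 ≤ δ) (hκ : 0 ≤ κ) (hh : 0 ≤ h) (hx : 0 ≤ x) :
    |besqLaplace δ κ h x - Real.exp (-(κ * x)) * (1 + 2 * κ * h * (κ * x - δ / 2))| ≤
      (2 * κ * h) ^ 2 * ((κ * x + δ / 2) + (κ * x + δ / 2) ^ 2) := by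
  obtain ⟨z, hz_eq, hz_le, hz_abs, hz_sub⟩ := exists_besqLaplace_eq_exp_mul_exp hδ hκ hh hx
  have hp : 0 ≤ κ * x := by positivity
  set w := 2 * κ * h * (κ * x - δ / 2)
  have hz_sq : z ^ 2 ≤ (2 * κ * h) ^ 2 * (κ * x + δ / 2) ^ 2 := by
    rw [← mul_pow, ← sq_abs]
    exact pow_le_pow_left₀ (abs_nonneg z) hz_abs 2
  have hfirst : |Real.exp (-(κ * x)) * (z - w)| ≤ (2 * κ * h) ^ 2 * (κ * x + δ / 2) := by
    rw [abs_mul, abs_of_pos (Real.exp_pos _)]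
    exact (mul_le_of_le_one_left (abs_nonneg _) (Real.exp_le_one_iff.2 (neg_nonpos.2 hp))).trans
      hz_sub
  have hsecond : |Real.exp (-(κ * x)) * (Real.exp z - 1 - z)| ≤ z ^ 2 := by
    rw [abs_mul, abs_of_pos (Real.exp_pos _)]
    exact exp_neg_mul_abs_exp_sub_le hp hz_le
  calc _ = |Real.exp (-(κ * x)) * (z - w) + Real.exp (-(κ * x)) * (Real.exp z - 1 - z)| := by
        rw [hz_eq]
        ring_nf
    _ ≤ (2 * κ * h) ^ 2 * (κ * x + δ / 2) + z ^ 2 :=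
        (abs_add_le _ _).trans (add_le_add hfirst hsecond)
    _ ≤ _ := by linarith

/-- The second-order Taylor expansion of `x' ↦ exp (-κ (x' - x)) - 1` at `x`, with `x' - x` and
`(x' - x) ^ 2` compensated by the leading terms of their means after a time `h`. -/
noncomputable def compensatedTaylor (δ κ h x x' : ℝ) : ℝ :=
  κ ^ 2 / 2 * ((x' - x) ^ 2 - 4 * h * x) - κ * (x' - x - δ * h)

/-- The error of the second-order expansion, around `x`, of `x' ↦ exp (-κ x')` as its mean
`besqLaplace δ κ h x` plus a centred term. -/
noncomputable def laplaceRemainder (δ κ h x x' : ℝ) : ℝ :=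
  Real.exp (-(κ * x')) - besqLaplace δ κ h x -
    Real.exp (-(κ * x)) * compensatedTaylor δ κ h x x'

lemma abs_laplaceRemainder_le (hδ : 0 ≤ δ) (hκ : 0 ≤ κ) (hh : 0 ≤ h) (hx : 0 ≤ x)
    (hx' : 0 ≤ x') :
    |laplaceRemainder δ κ h x x'| ≤
      4 * (κ ^ 2 + κ ^ 3) * cubicRemainder (x' - x) +
        (2 * κ * h) ^ 2 * ((κ * x + δ / 2) + (κ * x + δ / 2) ^ 2) := by
  have htaylor := abs_exp_neg_sub_taylor_le (mul_nonneg hκ hx) (mul_nonneg hκ hx')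
  have hremainder := cubicRemainder_mul_le hκ (x' - x)
  rw [mul_sub] at hremainder
  calc _ = |(Real.exp (-(κ * x')) - Real.exp (-(κ * x)) *
          (1 - (κ * x' - κ * x) + (κ * x' - κ * x) ^ 2 / 2)) -
        (besqLaplace δ κ h x - Real.exp (-(κ * x)) * (1 + 2 * κ * h * (κ * x - δ / 2)))| := by
        rw [laplaceRemainder, compensatedTaylor]
        ring_nf
    _ ≤ 4 * cubicRemainder (κ * x' - κ * x) +
        (2 * κ * h) ^ 2 * ((κ * x + δ / 2) + (κ * x + δ / 2) ^ 2) :=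
        (abs_sub _ _).trans (add_le_add htaylor (abs_besqLaplace_sub_le hδ hκ hh hx))
    _ ≤ _ := by linarith

end LaplaceKernel

namespace IsBESQ

variable {Ω : Type*} {m : MeasurableSpace Ω} {μ : Measure Ω} {ℱ : Filtration ℝ m}
  {δ y κ K s t : ℝ} {T : ℝ≥0} {Y : ℝ → Ω → ℝ} {W : Ω → ℝ}

lemma memLp_two_sub (hY : IsBESQ μ ℱ δ y Y) (s t : ℝ) : MemLp (fun ω ↦ Y t ω - Y s ω) 2 μ :=
  (hY.memLp_two t).sub (hY.memLp_two s)

lemma exp_neg_mul_le_one (hY : IsBESQ μ ℱ δ y Y) (hκ : 0 ≤ κ) (t : ℝ) (ω : Ω) :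
    Real.exp (-(κ * Y t ω)) ≤ 1 :=
  Real.exp_le_one_iff.2 (neg_nonpos.2 (mul_nonneg hκ (hY.nonneg t ω)))

lemma stronglyMeasurable_exp_neg (hY : IsBESQ μ ℱ δ y Y) (κ : ℝ) (hst : s ≤ t) :
    StronglyMeasurable[ℱ t] fun ω ↦ Real.exp (-(κ * Y s ω)) :=
  Real.continuous_exp.comp_stronglyMeasurable ((hY.stronglyMeasurable_of_le hst).const_mul κ).neg

variable [IsProbabilityMeasure μ]

lemma integral_mul_compensatedTaylor (hY : IsBESQ μ ℱ δ y Y) (hs : 0 ≤ s) (hst : s ≤ t)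
    (hW : StronglyMeasurable[ℱ s] W) {C : ℝ} (hC : ∀ ω, |W ω| ≤ C) (κ : ℝ) :
    ∫ ω, W ω * compensatedTaylor δ κ (t - s) (Y s ω) (Y t ω) ∂μ =
      κ ^ 2 / 2 * (2 * δ + δ ^ 2) * (t - s) ^ 2 * ∫ ω, W ω ∂μ := by
  have hWm : AEStronglyMeasurable W μ := (hW.mono (ℱ.le s)).aestronglyMeasurable
  have hW_mul {f : Ω → ℝ} (hf : Integrable f μ) : Integrable (fun ω ↦ W ω * f ω) μ :=
    hf.bdd_mul hWm (Eventually.of_forall hC)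
  have hW1 : Integrable W μ := by simpa using hW_mul (integrable_const (1 : ℝ))
  have hW2 : MemLp W 2 μ := .of_bound hWm C (Eventually.of_forall hC)
  have hsq := hW_mul (hY.memLp_two_sub s t).integrable_sq
  have hs_int := hW_mul (hY.integrable s)
  have ht_int := hW_mul (hY.integrable t)
  have hexpand : ∀ ω, W ω * compensatedTaylor δ κ (t - s) (Y s ω) (Y t ω) =
      κ ^ 2 / 2 * (W ω * (Y t ω - Y s ω) ^ 2) - (2 * κ ^ 2 * (t - s) - κ) * (W ω * Y s ω) -
        κ * (W ω * Y t ω) + κ * δ * (t - s) * W ω := fun ω ↦ by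
    rw [compensatedTaylor]
    ring
  simp_rw [hexpand]
  rw [integral_add ((((hsq.const_mul _).sub' (hs_int.const_mul _)).sub' (ht_int.const_mul _)))
      (hW1.const_mul _),
    integral_sub ((hsq.const_mul _).sub' (hs_int.const_mul _)) (ht_int.const_mul _),
    integral_sub (hsq.const_mul _) (hs_int.const_mul _)]
  simp_rw [integral_const_mul]
  rw [hY.integral_mul_sq_sub hs hst hW hC, hY.integral_mul_eq hs hst hW hW2]
  ring

lemma abs_integral_mul_compensatedTaylor_le (hY : IsBESQ μ ℱ δ y Y) (hs : 0 ≤ s) (hst : s ≤ t)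
    (hκ : 0 ≤ κ) (hκK : κ ≤ K) (hW : StronglyMeasurable[ℱ s] W) (hW1 : ∀ ω, |W ω| ≤ 1) :
    |∫ ω, W ω * compensatedTaylor δ κ (t - s) (Y s ω) (Y t ω) ∂μ| ≤
      K ^ 2 / 2 * (2 * δ + δ ^ 2) * (t - s) ^ 2 := by
  have hδ := hY.dim_nonneg
  have hmean : |∫ ω, W ω ∂μ| ≤ 1 := by
    simpa using norm_integral_le_of_norm_le_const (μ := μ) (f := W) (Eventually.of_forall hW1)
  rw [hY.integral_mul_compensatedTaylor hs hst hW hW1, abs_mul,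
    abs_of_nonneg (by positivity : 0 ≤ κ ^ 2 / 2 * (2 * δ + δ ^ 2) * (t - s) ^ 2)]
  refine (mul_le_of_le_one_right (by positivity) hmean).trans ?_
  gcongr

lemma integrable_compensatedTaylor (hY : IsBESQ μ ℱ δ y Y) (κ h s t : ℝ) :
    Integrable (fun ω ↦ compensatedTaylor δ κ h (Y s ω) (Y t ω)) μ :=
  (((hY.memLp_two_sub s t).integrable_sq.sub' ((hY.integrable s).const_mul _)).const_mul _).sub'
    ((((hY.memLp_two_sub s t).integrable one_le_two).sub' (integrable_const _)).const_mul _)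

lemma integrable_besqLaplace (hY : IsBESQ μ ℱ δ y Y) (hκ : 0 ≤ κ) (t : ℝ) {h : ℝ} (hh : 0 ≤ h) :
    Integrable (fun ω ↦ besqLaplace δ κ h (Y t ω)) μ :=
  .of_bound ((continuous_besqLaplace δ κ h).measurable.comp
    (hY.measurable t)).aestronglyMeasurable 1 (Eventually.of_forall fun ω ↦ by
      rw [Real.norm_of_nonneg (besqLaplace_nonneg hκ hh)]
      exact besqLaplace_le_one hY.dim_nonneg hκ hh (hY.nonneg t ω))

lemma integrable_exp_neg (hY : IsBESQ μ ℱ δ y Y) (hκ : 0 ≤ κ) (t : ℝ) :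
    Integrable (fun ω ↦ Real.exp (-(κ * Y t ω))) μ := by
  simpa using hY.integrable_besqLaplace hκ t le_rfl

lemma integrable_laplaceRemainder (hY : IsBESQ μ ℱ δ y Y) (hκ : 0 ≤ κ) {h : ℝ} (hh : 0 ≤ h)
    (s t : ℝ) : Integrable (fun ω ↦ laplaceRemainder δ κ h (Y s ω) (Y t ω)) μ := by
  refine ((hY.integrable_exp_neg hκ t).sub' (hY.integrable_besqLaplace hκ s hh)).sub'
    ((hY.integrable_compensatedTaylor κ h s t).bdd_mul (c := 1)
      ((hY.stronglyMeasurable_exp_neg κ le_rfl).mono (ℱ.le s)).aestronglyMeasurable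
      (Eventually.of_forall fun ω ↦ ?_))
  rw [Real.norm_of_nonneg (Real.exp_pos _).le]
  exact hY.exp_neg_mul_le_one hκ s ω

lemma integral_abs_laplaceRemainder_le (hY : IsBESQ μ ℱ δ y Y) (hs : 0 ≤ s)
    (hst : s ≤ t) (htT : t ≤ T) (hκ : 0 ≤ κ) (hκK : κ ≤ K) :
    ∫ ω, |laplaceRemainder δ κ (t - s) (Y s ω) (Y t ω)| ∂μ ≤
      4 * (K ^ 2 + K ^ 3) * ∫ ω, cubicRemainder (Y t ω - Y s ω) ∂μ + (2 * K * (t - s)) ^ 2 *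
        ∫ ω, ((K * runningMax (fun s : ℝ≥0 ↦ Y s) T ω + δ / 2) +
          (K * runningMax (fun s : ℝ≥0 ↦ Y s) T ω + δ / 2) ^ 2) ∂μ := by
  have hδ := hY.dim_nonneg
  have hh := sub_nonneg.2 hst
  have hK := hκ.trans hκK
  set b : Ω → ℝ := fun ω ↦ K * runningMax (fun s : ℝ≥0 ↦ Y s) T ω + δ / 2
  have hb : MemLp b 2 μ := ((hY.memLp_runningMax T).const_mul K).add (memLp_const _)
  have hcubic := (hY.integrable_cubicRemainder_sub s t).const_mul (4 * (K ^ 2 + K ^ 3))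
  have hsecond := ((hb.integrable one_le_two).fun_add hb.integrable_sq).const_mul
    ((2 * K * (t - s)) ^ 2)
  rw [← integral_const_mul, ← integral_const_mul, ← integral_add hcubic hsecond]
  refine integral_mono_of_nonneg (Eventually.of_forall fun ω ↦ abs_nonneg _)
    (hcubic.add hsecond) (Eventually.of_forall fun ω ↦ ?_)
  refine (abs_laplaceRemainder_le hδ hκ hh (hY.nonneg s ω) (hY.nonneg t ω)).trans ?_
  have hYs := hY.nonneg s ω
  have hYb : κ * Y s ω + δ / 2 ≤ b ω := by
    have := hY.le_runningMax ω hs (hst.trans htT)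
    simp only [b]
    gcongr
  have := cubicRemainder_nonneg (Y t ω - Y s ω)
  dsimp only
  gcongr

/-- Bounds, up to the factor `h ^ 2`, the second-order errors made over one time step of length `h`
in `[0, T]` when the Laplace transform is taken at a parameter in `[0, K]`. -/
noncomputable def laplaceStepConst (μ : Measure Ω) (δ K : ℝ) (T : ℝ≥0) (Y : ℝ → Ω → ℝ) : ℝ :=
  K ^ 2 / 2 * (2 * δ + δ ^ 2) + 4 * K ^ 2 *
    ∫ ω, ((K * runningMax (fun s : ℝ≥0 ↦ Y s) T ω + δ / 2) +
      (K * runningMax (fun s : ℝ≥0 ↦ Y s) T ω + δ / 2) ^ 2) ∂μ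

lemma abs_integral_exp_sub_integral_besqLaplace_le (hY : IsBESQ μ ℱ δ y Y) (hs : 0 ≤ s)
    (hst : s ≤ t) (htT : t ≤ T) (hκ : 0 ≤ κ) (hκK : κ ≤ K) (hW : StronglyMeasurable[ℱ s] W)
    (hW1 : ∀ ω, |W ω| ≤ 1) :
    |∫ ω, W ω * Real.exp (-(κ * Y t ω)) ∂μ - ∫ ω, W ω * besqLaplace δ κ (t - s) (Y s ω) ∂μ| ≤
      4 * (K ^ 2 + K ^ 3) * ∫ ω, cubicRemainder (Y t ω - Y s ω) ∂μ +
        laplaceStepConst μ δ K T Y * (t - s) ^ 2 := by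
  have hh := sub_nonneg.2 hst
  set V : Ω → ℝ := fun ω ↦ W ω * Real.exp (-(κ * Y s ω))
  set p : Ω → ℝ := fun ω ↦ compensatedTaylor δ κ (t - s) (Y s ω) (Y t ω)
  set R : Ω → ℝ := fun ω ↦ laplaceRemainder δ κ (t - s) (Y s ω) (Y t ω)
  have hV : StronglyMeasurable[ℱ s] V := hW.mul (hY.stronglyMeasurable_exp_neg κ le_rfl)
  have hV1 : ∀ ω, |V ω| ≤ 1 := fun ω ↦ by
    rw [abs_mul, abs_of_pos (Real.exp_pos _)]
    exact mul_le_one₀ (hW1 ω) (Real.exp_pos _).le (hY.exp_neg_mul_le_one hκ s ω)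
  have hmul {W f : Ω → ℝ} (hW : StronglyMeasurable[ℱ s] W) (hW1 : ∀ ω, |W ω| ≤ 1)
      (hf : Integrable f μ) : Integrable (fun ω ↦ W ω * f ω) μ :=
    hf.bdd_mul (hW.mono (ℱ.le s)).aestronglyMeasurable (Eventually.of_forall hW1)
  have hR := hY.integrable_laplaceRemainder hκ hh s t
  have hsplit : ∫ ω, W ω * Real.exp (-(κ * Y t ω)) ∂μ -
      ∫ ω, W ω * besqLaplace δ κ (t - s) (Y s ω) ∂μ = ∫ ω, W ω * R ω ∂μ + ∫ ω, V ω * p ω ∂μ := by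
    rw [← integral_sub (hmul hW hW1 (hY.integrable_exp_neg hκ t))
      (hmul hW hW1 (hY.integrable_besqLaplace hκ s hh)), ← integral_add (hmul hW hW1 hR)
      (hmul hV hV1 (hY.integrable_compensatedTaylor κ _ s t))]
    congr with ω
    simp only [V, laplaceRemainder]
    ring
  have hremainder : |∫ ω, W ω * R ω ∂μ| ≤ ∫ ω, |R ω| ∂μ :=
    abs_integral_le_integral_abs.trans (integral_mono (hmul hW hW1 hR).abs hR.abs fun ω ↦ by
      rw [abs_mul]
      exact mul_le_of_le_one_left (abs_nonneg _) (hW1 ω))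
  rw [hsplit, laplaceStepConst]
  linarith [abs_add_le (∫ ω, W ω * R ω ∂μ) (∫ ω, V ω * p ω ∂μ), hremainder,
    hY.abs_integral_mul_compensatedTaylor_le hs hst hκ hκK hV hV1,
    hY.integral_abs_laplaceRemainder_le hs hst htT hκ hκK]

lemma abs_integral_besqLaplace_sub_le (hY : IsBESQ μ ℱ δ y Y) (hs : 0 ≤ s)
    (hst : s ≤ t) (htT : t ≤ T) (hκ : 0 ≤ κ) {r : ℝ} (hr : 0 ≤ r)
    (hW : StronglyMeasurable[ℱ s] W) (hW1 : ∀ ω, |W ω| ≤ 1) :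
    |∫ ω, W ω * besqLaplace δ κ r (Y t ω) ∂μ -
        ∫ ω, W ω * besqLaplace δ κ (r + (t - s)) (Y s ω) ∂μ| ≤
      4 * (κ ^ 2 + κ ^ 3) * ∫ ω, cubicRemainder (Y t ω - Y s ω) ∂μ +
        laplaceStepConst μ δ κ T Y * (t - s) ^ 2 := by
  set c := (1 + 2 * κ * r) ^ (-(δ / 2))
  set κ' := κ / (1 + 2 * κ * r)
  have hD : 1 ≤ 1 + 2 * κ * r := by
    have : 0 ≤ 2 * κ * r := by positivity
    linarith
  have hc0 : 0 ≤ c := by positivity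
  have hc1 : c ≤ 1 := Real.rpow_le_one_of_one_le_of_nonpos hD (by linarith [hY.dim_nonneg])
  have ht_eq : ∀ ω, W ω * besqLaplace δ κ r (Y t ω) =
      c * (W ω * Real.exp (-(κ' * Y t ω))) := fun ω ↦ by
    have := besqLaplace_add δ (Y t ω) hκ hr le_rfl
    rw [add_zero, besqLaplace_zero] at this
    rw [this]
    ring
  have hs_eq : ∀ ω, W ω * besqLaplace δ κ (r + (t - s)) (Y s ω) =
      c * (W ω * besqLaplace δ κ' (t - s) (Y s ω)) := fun ω ↦ by
    rw [besqLaplace_add δ (Y s ω) hκ hr (sub_nonneg.2 hst)]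
    ring
  simp_rw [ht_eq, hs_eq, integral_const_mul]
  rw [← mul_sub, abs_mul, abs_of_nonneg hc0]
  exact (mul_le_of_le_one_left (abs_nonneg _) hc1).trans
    (hY.abs_integral_exp_sub_integral_besqLaplace_le hs hst htT (by positivity)
      (div_le_self hκ hD) hW hW1)

theorem integral_mul_exp_neg_eq (hY : IsBESQ μ ℱ δ y Y) (hs : 0 ≤ s) (hst : s ≤ t) (hκ : 0 ≤ κ)
    (hW : StronglyMeasurable[ℱ s] W) (hW1 : ∀ ω, |W ω| ≤ 1) :
    ∫ ω, W ω * Real.exp (-(κ * Y t ω)) ∂μ = ∫ ω, W ω * besqLaplace δ κ (t - s) (Y s ω) ∂μ := by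
  set T : ℝ≥0 := ⟨t, hs.trans hst⟩
  set B := laplaceStepConst μ δ κ T Y
  set u := gridPoint s t
  set φ : ℕ → ℕ → ℝ := fun n k ↦ ∫ ω, W ω * besqLaplace δ κ (t - u n k) (Y (u n k) ω) ∂μ
  have hstep : ∀ n, ∀ k ∈ Finset.range n, |φ n (k + 1) - φ n k| ≤
      4 * (κ ^ 2 + κ ^ 3) * ∫ ω, cubicRemainder (Y (u n (k + 1)) ω - Y (u n k) ω) ∂μ +
        B * ((t - s) / n) ^ 2 := fun n k hk ↦ by
    have hkn := Finset.mem_range.1 hk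
    have hu := gridPoint_mem_Icc hst hkn.le
    have hu' := gridPoint_mem_Icc hst (Nat.succ_le_iff.2 hkn)
    have := hY.abs_integral_besqLaplace_sub_le (T := T) (hs.trans hu.1)
      (monotone_gridPoint hst n k.le_succ) hu'.2 hκ (sub_nonneg.2 hu'.2)
      (hW.mono (ℱ.mono hu.1)) hW1
    rwa [sub_add_sub_cancel, gridPoint_succ_sub] at this
  have hbound : ∀ n : ℕ, 0 < n → |φ n n - φ n 0| ≤ 4 * (κ ^ 2 + κ ^ 3) *
      (∑ k ∈ Finset.range n, ∫ ω, cubicRemainder (Y (u n (k + 1)) ω - Y (u n k) ω) ∂μ) +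
        B * (t - s) ^ 2 / n := fun n hn ↦ by
    rw [← Finset.sum_range_sub]
    refine (Finset.abs_sum_le_sum_abs _ _).trans ((Finset.sum_le_sum (hstep n)).trans_eq ?_)
    rw [Finset.sum_add_distrib, ← Finset.mul_sum, Finset.sum_const, Finset.card_range,
      nsmul_eq_mul]
    field_simp
  have hlim : Tendsto (fun n : ℕ ↦ 4 * (κ ^ 2 + κ ^ 3) *
      (∑ k ∈ Finset.range n, ∫ ω, cubicRemainder (Y (u n (k + 1)) ω - Y (u n k) ω) ∂μ) +
        B * (t - s) ^ 2 / n) atTop (𝓝 0) := by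
    simpa using ((hY.tendsto_sum_integral_cubicRemainder hs hst).const_mul _).add
      (tendsto_const_div_atTop_nhds_zero_nat (B * (t - s) ^ 2))
  refine sub_eq_zero.1 (abs_nonpos_iff.1 (ge_of_tendsto hlim ?_))
  filter_upwards [eventually_gt_atTop 0] with n hn
  simpa [φ, u, gridPoint_self s t hn.ne'] using hbound n hn

end IsBESQ

section JointLaplace

/-- The joint Laplace transform `z ↦ E exp (-∑ s ∈ l, X_s - κ X_t)` of the squared-Bessel process
`X` of dimension `δ` started at `z`, for a list of times such that `t :: l` is decreasing. -/
noncomputable def besqJointLaplace (δ : ℝ) : ℝ → ℝ → List ℝ → ℝ → ℝ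
  | κ, t, [], z => besqLaplace δ κ t z
  | κ, t, s :: l, z => (1 + 2 * κ * (t - s)) ^ (-(δ / 2)) *
      besqJointLaplace δ (1 + κ / (1 + 2 * κ * (t - s))) s l z

lemma continuous_besqJointLaplace (δ κ t : ℝ) (l : List ℝ) :
    Continuous (besqJointLaplace δ κ t l) := by
  induction l generalizing κ t with
  | nil => exact continuous_besqLaplace δ κ t
  | cons s l ih => exact continuous_const.mul (ih _ s)

end JointLaplace

namespace IsBESQ

variable {Ω : Type*} {m : MeasurableSpace Ω} {μ : Measure Ω} {ℱ : Filtration ℝ m}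
  {δ y κ t : ℝ} {Y : ℝ → Ω → ℝ}

lemma stronglyMeasurable_exp_neg_list_sum (hY : IsBESQ μ ℱ δ y Y) {l : List ℝ}
    (hl : ∀ s ∈ l, s ≤ t) : StronglyMeasurable[ℱ t] fun ω ↦ Real.exp (-(l.map (Y · ω)).sum) := by
  refine Real.continuous_exp.comp_stronglyMeasurable (StronglyMeasurable.neg ?_)
  induction l with
  | nil => exact stronglyMeasurable_const
  | cons s l ih =>
    simp only [List.map_cons, List.sum_cons]
    exact (hY.stronglyMeasurable_of_le (hl s List.mem_cons_self)).add
      (ih fun r hr ↦ hl r (List.mem_cons_of_mem s hr))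

lemma abs_exp_neg_list_sum_le_one (hY : IsBESQ μ ℱ δ y Y) (l : List ℝ) (ω : Ω) :
    |Real.exp (-(l.map (Y · ω)).sum)| ≤ 1 := by
  rw [abs_of_pos (Real.exp_pos _), Real.exp_le_one_iff, neg_nonpos]
  refine List.sum_nonneg fun x hx ↦ ?_
  obtain ⟨s, -, rfl⟩ := List.mem_map.1 hx
  exact hY.nonneg s ω

variable [IsProbabilityMeasure μ]

lemma integral_exp_neg_list_sum_mul (hY : IsBESQ μ ℱ δ y Y) {l : List ℝ} (hκ : 0 ≤ κ)
    (hl : (t :: l).Pairwise (· ≥ ·)) (h0 : ∀ s ∈ t :: l, 0 ≤ s) :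
    ∫ ω, Real.exp (-(l.map (Y · ω)).sum) * Real.exp (-(κ * Y t ω)) ∂μ =
      besqJointLaplace δ κ t l y := by
  induction l generalizing κ t with
  | nil =>
    have := hY.integral_mul_exp_neg_eq (W := fun _ ↦ 1) le_rfl (h0 t List.mem_cons_self) hκ
      stronglyMeasurable_const (fun _ ↦ abs_one.le)
    simpa [hY.init, besqJointLaplace] using this
  | cons s l ih =>
    have hst : s ≤ t := List.rel_of_pairwise_cons hl List.mem_cons_self
    have hls : ∀ r ∈ s :: l, r ≤ s := by
      simpa using fun r hr ↦ List.rel_of_pairwise_cons hl.of_cons hr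
    have hmarkov := hY.integral_mul_exp_neg_eq (h0 s (by simp)) hst hκ
      (hY.stronglyMeasurable_exp_neg_list_sum hls) (hY.abs_exp_neg_list_sum_le_one (s :: l))
    have hκ' : 0 ≤ 1 + κ / (1 + 2 * κ * (t - s)) := by
      have := sub_nonneg.2 hst
      positivity
    rw [hmarkov, besqJointLaplace, ← ih hκ' hl.of_cons
      (fun r hr ↦ h0 r (List.mem_cons_of_mem t hr)), ← integral_const_mul]
    congr with ω
    rw [besqLaplace, mul_left_comm, ← Real.exp_add, ← Real.exp_add, List.map_cons, List.sum_cons]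
    congr 2
    ring

lemma integral_prod_exp_neg_eq_besqJointLaplace (hY : IsBESQ μ ℱ δ y Y) {ι : Type*} [Fintype ι]
    {s : ι → ℝ} (hs : ∀ j, 0 ≤ s j) :
    ∫ ω, ∏ j, Real.exp (-Y (s j) ω) ∂μ = besqJointLaplace δ 0 (∑ j, s j)
      ((Finset.univ.val.map s).sort (· ≥ ·)) y := by
  set l := (Finset.univ.val.map s).sort (· ≥ ·)
  have hmem : ∀ r ∈ l, ∃ j, s j = r := fun r hr ↦ by simpa [l] using hr
  rw [← hY.integral_exp_neg_list_sum_mul le_rfl]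
  · congr with ω
    have hsum : (l.map (Y · ω)).sum = ∑ j, Y (s j) ω := by
      rw [← Multiset.sum_coe, ← Multiset.map_coe, Multiset.sort_eq, Multiset.map_map]
      rfl
    rw [hsum, ← Real.exp_sum, Finset.sum_neg_distrib, zero_mul, neg_zero, Real.exp_zero, mul_one]
  · refine List.pairwise_cons.2 ⟨fun r hr ↦ ?_, Multiset.pairwise_sort _ _⟩
    obtain ⟨j, rfl⟩ := hmem r hr
    exact Finset.single_le_sum (fun i _ ↦ hs i) (Finset.mem_univ j)
  · intro r hr
    rcases List.mem_cons.1 hr with rfl | hr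
    · exact Finset.sum_nonneg fun j _ ↦ hs j
    · obtain ⟨j, rfl⟩ := hmem r hr
      exact hs j

end IsBESQ

theorem tendsto_integral_prod_exp_neg {ι : Type*} {l : Filter ι} {Ω : ι → Type*}
    {m : ∀ i, MeasurableSpace (Ω i)} {μ : ∀ i, Measure (Ω i)} [∀ i, IsProbabilityMeasure (μ i)]
    {ℱ : ∀ i, Filtration ℝ (m i)} {δ z : ℝ} {y : ι → ℝ} {Y : ∀ i, ℝ → Ω i → ℝ}
    (hY : ∀ i, IsBESQ (μ i) (ℱ i) δ (y i) (Y i)) {Ω' : Type*} {m' : MeasurableSpace Ω'}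
    {μ' : Measure Ω'} [IsProbabilityMeasure μ'] {ℱ' : Filtration ℝ m'} {Z : ℝ → Ω' → ℝ}
    (hZ : IsBESQ μ' ℱ' δ z Z) (hyz : Tendsto y l (𝓝 z)) {κ : Type*}
    [Fintype κ] {s : κ → ℝ} (hs : ∀ j, 0 ≤ s j) :
    Tendsto (fun i ↦ ∫ ω, ∏ j, Real.exp (-Y i (s j) ω) ∂μ i) l
      (𝓝 (∫ ω, ∏ j, Real.exp (-Z (s j) ω) ∂μ')) := by
  simp_rw [fun i ↦ (hY i).integral_prod_exp_neg_eq_besqJointLaplace hs,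
    hZ.integral_prod_exp_neg_eq_besqJointLaplace hs]
  exact ((continuous_besqJointLaplace _ _ _ _).tendsto z).comp hyz

namespace IsBESQ

variable {Ω : Type*} {m : MeasurableSpace Ω} {μ : Measure Ω} {ℱ : Filtration ℝ m}
  {δ y t : ℝ} {Y : ℝ → Ω → ℝ}

theorem rescale (hY : IsBESQ μ ℱ δ y Y) (ht : 0 < t) :
    IsBESQ μ (filtrationComp ℱ ⟨(t * ·), monotone_mul_left_of_nonneg ht.le⟩) δ (y / t)
      (fun s ω ↦ Y (t * s) ω / t) where
  nonneg s ω := div_nonneg (hY.nonneg _ _) ht.le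
  cont ω := ((hY.cont ω).comp (continuous_const_mul t)).div_const t
  init ω := by rw [mul_zero, hY.init]
  adapted s := (hY.adapted (t * s)).div_const t
  integrable_sq s := by
    simp_rw [div_pow]
    exact (hY.integrable_sq _).div_const _
  mart a b ha hab := by
    have hscale : ∀ r ω, Y (t * r) ω / t - y / t - δ * r =
        t⁻¹ * (Y (t * r) ω - y - δ * (t * r)) := fun r ω ↦ by
      field_simp
    simp_rw [hscale]
    filter_upwards [condExp_smul t⁻¹ (fun ω ↦ Y (t * b) ω - y - δ * (t * b)) (ℱ (t * a)),
      hY.mart (t * a) (t * b) (by positivity) (by gcongr)] with ω hsmul hmart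
    exact hsmul.trans (congrArg (t⁻¹ * ·) hmart)
  qv a b ha hab := by
    have hscale : ∀ r ω, (Y (t * r) ω / t - y / t - δ * r) ^ 2 -
        4 * ∫ u in (0 : ℝ)..r, Y (t * u) ω / t = (t ^ 2)⁻¹ *
          ((Y (t * r) ω - y - δ * (t * r)) ^ 2 - 4 * ∫ u in (0 : ℝ)..t * r, Y u ω) := fun r ω ↦ by
      rw [intervalIntegral.integral_div,
        intervalIntegral.integral_comp_mul_left (fun u ↦ Y u ω) ht.ne', mul_zero, smul_eq_mul]
      field_simp
    simp_rw [hscale]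
    filter_upwards [condExp_smul (t ^ 2)⁻¹ (fun ω ↦ (Y (t * b) ω - y - δ * (t * b)) ^ 2 -
      4 * ∫ u in (0 : ℝ)..t * b, Y u ω) (ℱ (t * a)),
      hY.qv (t * a) (t * b) (by positivity) (by gcongr)] with ω hsmul hqv
    exact hsmul.trans (congrArg ((t ^ 2)⁻¹ * ·) hqv)

lemma intervalIntegral_div_rpow_eq (hY : IsBESQ μ ℱ δ y Y) (ht : 0 < t) (α γ : ℝ) (ω : Ω) :
    (∫ s in (1 : ℝ)..t, s ^ γ * Y s ω ^ α) / t ^ (1 + γ + α) =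
      ∫ s in t⁻¹..1, s ^ γ * (Y (t * s) ω / t) ^ α := by
  have hchange := intervalIntegral.integral_comp_mul_left (a := t⁻¹) (b := 1)
    (fun s ↦ s ^ γ * Y s ω ^ α) ht.ne'
  rw [mul_one, mul_inv_cancel₀ ht.ne', smul_eq_mul] at hchange
  have hintegrand : ∀ s ∈ uIcc t⁻¹ 1, s ^ γ * (Y (t * s) ω / t) ^ α =
      (t ^ (γ + α))⁻¹ * ((t * s) ^ γ * Y (t * s) ω ^ α) := fun s hs ↦ by
    have hs0 : 0 < s := (lt_min (inv_pos.2 ht) one_pos).trans_le hs.1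
    rw [Real.div_rpow (hY.nonneg _ _) ht.le, Real.mul_rpow ht.le hs0.le, Real.rpow_add ht]
    field_simp
  rw [intervalIntegral.integral_congr hintegrand, intervalIntegral.integral_const_mul, hchange,
    add_assoc, Real.rpow_add ht, Real.rpow_one]
  field_simp

end IsBESQ

lemma sq_half_pow_div_sq_half_pow_rpow (θ : ℝ) (k : ℕ) :
    ((1 / 2 : ℝ) ^ k) ^ 2 / (((1 / 2 : ℝ) ^ (k + 1)) ^ θ) ^ 2 = 4 ^ θ * (4 ^ (θ - 1)) ^ k := by
  have hrpow : (((1 / 2 : ℝ) ^ (k + 1)) ^ θ) ^ 2 = ((4 ^ θ) ^ (k + 1))⁻¹ := by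
    rw [Real.rpow_pow_comm (by positivity), Real.rpow_pow_comm (by positivity), ← pow_mul, mul_comm,
      pow_mul, ← Real.inv_rpow (by positivity), ← inv_pow]
    norm_num
  have hpow : ((1 / 2 : ℝ) ^ k) ^ 2 = (4 ^ k)⁻¹ := by
    rw [← pow_mul, mul_comm, pow_mul, ← inv_pow]
    norm_num
  rw [hrpow, hpow, Real.rpow_sub_one (by norm_num), div_pow]
  field_simp
  ring

namespace IsBESQ

variable {Ω : Type*} {m : MeasurableSpace Ω} {μ : Measure Ω} [IsProbabilityMeasure μ]
  {ℱ : Filtration ℝ m} {δ y K θ ρ s₀ : ℝ} {Y : ℝ → Ω → ℝ}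

lemma measure_lt_runningMax_le (hY : IsBESQ μ ℱ δ y Y) {T : ℝ≥0} (hyT : y ≤ K * T) {a : ℝ}
    (ha : 0 < a) :
    μ {ω | a < runningMax (fun s : ℝ≥0 ↦ Y s) T ω} ≤
      ENNReal.ofReal (4 * ((K + δ) ^ 2 + 4 * K + 2 * δ) * T ^ 2 / a ^ 2) := by
  have hy := hY.start_nonneg
  have hδ := hY.dim_nonneg
  set S := runningMax (fun s : ℝ≥0 ↦ Y s) T
  have hmoment : ∫ ω, S ω ^ 2 ∂μ ≤ 4 * ((K + δ) ^ 2 + 4 * K + 2 * δ) * T ^ 2 := by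
    refine (hY.integral_sq_runningMax_le T).trans ?_
    have hsq : (y + δ * T) ^ 2 ≤ ((K + δ) * T) ^ 2 := by
      gcongr
      linarith
    have hmul : y * T ≤ K * T * T := by gcongr
    linarith
  have hmarkov := mul_meas_ge_le_integral_of_nonneg (Eventually.of_forall fun ω ↦ sq_nonneg (S ω))
    (hY.memLp_runningMax T).integrable_sq (a ^ 2)
  rw [ENNReal.le_ofReal_iff_toReal_le (measure_ne_top _ _) (by
    have := (integral_nonneg fun ω ↦ sq_nonneg (S ω)).trans hmoment
    positivity), le_div_iff₀' (by positivity)]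
  refine le_trans ?_ (hmarkov.trans hmoment)
  refine mul_le_mul_of_nonneg_left (measureReal_mono fun ω hω ↦ ?_) (sq_nonneg a)
  have hlt : a < S ω := hω
  exact pow_le_pow_left₀ ha.le hlt.le 2

/-- The constant in the bound on the probability that a squared-Bessel process of dimension `δ`,
started below `K * s₀`, exceeds a multiple of `u ^ θ` at some time `u` in `(s₀, 1]`. -/
noncomputable def growthConst (δ K θ : ℝ) : ℝ :=
  4 * ((K + δ) ^ 2 + 4 * K + 2 * δ) * 4 ^ θ * (1 - 4 ^ (θ - 1))⁻¹

theorem measure_exists_mul_rpow_lt_le (hY : IsBESQ μ ℱ δ y Y) (hK : 0 ≤ K) (hs₀ : 0 ≤ s₀)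
    (hy : y ≤ K * s₀) (hθ : 0 ≤ θ) (hθ1 : θ < 1) (hρ : 0 < ρ) :
    μ {ω | ∃ u ∈ Ioc s₀ 1, ρ * u ^ θ < Y u ω} ≤ ENNReal.ofReal (growthConst δ K θ / ρ ^ 2) := by
  have hδ := hY.dim_nonneg
  set A : ℝ := 4 * ((K + δ) ^ 2 + 4 * K + 2 * δ)
  set q : ℝ := 4 ^ (θ - 1)
  set T : ℕ → ℝ≥0 := fun k ↦ (1 / 2) ^ k
  set E : ℕ → Set Ω := fun k ↦
    {ω | s₀ ≤ T k ∧ ρ * (T (k + 1) : ℝ) ^ θ < runningMax (fun s : ℝ≥0 ↦ Y s) (T k) ω}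
  have hq0 : 0 ≤ q := by positivity
  have hq1 : q < 1 := Real.rpow_lt_one_of_one_lt_of_neg (by norm_num) (by linarith)
  have hsubset : {ω | ∃ u ∈ Ioc s₀ 1, ρ * u ^ θ < Y u ω} ⊆ ⋃ k, E k := by
    rintro ω ⟨u, hu, huY⟩
    have hu0 : 0 < u := hs₀.trans_lt hu.1
    obtain ⟨k, hk, hk'⟩ := exists_nat_pow_near_of_lt_one hu0 hu.2 (by norm_num : (0 : ℝ) < 1 / 2)
      (by norm_num)
    have hTk : u ≤ T k := by simpa [T] using hk'
    have hTk' : (T (k + 1) : ℝ) < u := by simpa [T] using hk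
    refine mem_iUnion.2 ⟨k, hu.1.le.trans hTk, lt_of_le_of_lt ?_
      (huY.trans_le (hY.le_runningMax ω hu0.le hTk))⟩
    gcongr
  have hE : ∀ k, μ (E k) ≤ ENNReal.ofReal (A * 4 ^ θ / ρ ^ 2 * q ^ k) := fun k ↦ by
    by_cases hk : s₀ ≤ T k
    · have hT : (T k : ℝ) ^ 2 / (ρ * (T (k + 1) : ℝ) ^ θ) ^ 2 = 4 ^ θ / ρ ^ 2 * q ^ k := by
        rw [mul_pow, mul_comm (ρ ^ 2), ← div_div]
        simp only [T, NNReal.coe_pow, NNReal.coe_div, NNReal.coe_one, NNReal.coe_ofNat]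
        rw [sq_half_pow_div_sq_half_pow_rpow, mul_div_right_comm]
      have hlevel : 0 < ρ * (T (k + 1) : ℝ) ^ θ := by positivity
      have := hY.measure_lt_runningMax_le (hy.trans (mul_le_mul_of_nonneg_left hk hK))
        hlevel
      rw [mul_div_assoc, hT, ← mul_assoc, ← mul_div_assoc] at this
      exact (measure_mono fun ω hω ↦ hω.2).trans this
    · simp [E, hk]
  calc μ {ω | ∃ u ∈ Ioc s₀ 1, ρ * u ^ θ < Y u ω} ≤ ∑' k, μ (E k) :=
        (measure_mono hsubset).trans (measure_iUnion_le E)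
    _ ≤ ∑' k, ENNReal.ofReal (A * 4 ^ θ / ρ ^ 2 * q ^ k) := ENNReal.tsum_le_tsum hE
    _ = ENNReal.ofReal (growthConst δ K θ / ρ ^ 2) := by
        rw [← ENNReal.ofReal_tsum_of_nonneg (fun k ↦ by positivity)
          ((summable_geometric_of_lt_one hq0 hq1).mul_left _), tsum_mul_left,
          tsum_geometric_of_lt_one hq0 hq1, growthConst]
        congr 1
        ring

end IsBESQ

section BoundedMoments

variable {Ω : Type*} {m : MeasurableSpace Ω} {μ : Measure Ω} {X : Ω → ℝ} {R : ℝ}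

lemma integrable_pow_of_abs_le [IsFiniteMeasure μ] (hX : AEMeasurable X μ)
    (hR : ∀ᵐ ω ∂μ, |X ω| ≤ R) (n : ℕ) : Integrable (fun ω ↦ X ω ^ n) μ := by
  refine .of_bound (hX.pow_const n).aestronglyMeasurable (R ^ n) ?_
  filter_upwards [hR] with ω hω
  rw [norm_pow, Real.norm_eq_abs]
  gcongr

lemma integral_eval_eq_sum [IsFiniteMeasure μ] (hX : AEMeasurable X μ)
    (hR : ∀ᵐ ω ∂μ, |X ω| ≤ R) (p : Polynomial ℝ) :
    ∫ ω, p.eval (X ω) ∂μ =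
      ∑ k ∈ Finset.range (p.natDegree + 1), p.coeff k * ∫ ω, X ω ^ k ∂μ := by
  simp only [Polynomial.eval_eq_sum_range, ← integral_const_mul]
  exact integral_finsetSum _ fun k _ ↦ (integrable_pow_of_abs_le hX hR k).const_mul _

lemma dist_integral_eval_le [IsProbabilityMeasure μ] (hX : AEMeasurable X μ)
    (hR : ∀ᵐ ω ∂μ, |X ω| ≤ R) (g : BoundedContinuousFunction ℝ ℝ) {p : Polynomial ℝ} {κ : ℝ}
    (hp : ∀ x ∈ Icc (-R) R, |p.eval x - g x| < κ) :
    dist (∫ ω, p.eval (X ω) ∂μ) (∫ ω, g (X ω) ∂μ) ≤ κ := by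
  have hintegrable_p : Integrable (fun ω ↦ p.eval (X ω)) μ := by
    simp only [Polynomial.eval_eq_sum_range]
    exact integrable_finsetSum _ fun k _ ↦ (integrable_pow_of_abs_le hX hR k).const_mul _
  have hintegrable_g : Integrable (fun ω ↦ g (X ω)) μ :=
    .of_bound (g.continuous.measurable.comp_aemeasurable hX).aestronglyMeasurable ‖g‖
      (ae_of_all _ fun ω ↦ g.norm_coe_le_norm _)
  rw [dist_eq_norm, ← integral_sub hintegrable_p hintegrable_g]
  refine (norm_integral_le_of_norm_le_const (C := κ) ?_).trans (by simp)
  filter_upwards [hR] with ω hω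
  exact (hp _ (abs_le.1 hω)).le

end BoundedMoments

section TendstoInDistribution

variable {ι E : Type*} {Ω : ι → Type*} {m : ∀ i, MeasurableSpace (Ω i)} {μ : ∀ i, Measure (Ω i)}
  [∀ i, IsProbabilityMeasure (μ i)] {Ω' : Type*} {m' : MeasurableSpace Ω'} {μ' : Measure Ω'}
  [IsProbabilityMeasure μ'] {l : Filter ι} {mE : MeasurableSpace E}

theorem tendstoInDistribution_iff_forall_integral_tendsto [TopologicalSpace E]
    [OpensMeasurableSpace E] {X : ∀ i, Ω i → E} {X' : Ω' → E} (hX : ∀ i, AEMeasurable (X i) (μ i))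
    (hX' : AEMeasurable X' μ') :
    TendstoInDistribution X l X' μ μ' ↔ ∀ g : BoundedContinuousFunction E ℝ,
      Tendsto (fun i ↦ ∫ ω, g (X i ω) ∂μ i) l (𝓝 (∫ ω, g (X' ω) ∂μ')) := by
  have hmap : ∀ (g : BoundedContinuousFunction E ℝ) i,
      ∫ x, g x ∂(μ i).map (X i) = ∫ ω, g (X i ω) ∂μ i := fun g i ↦
    integral_map (hX i) g.continuous.measurable.aestronglyMeasurable
  have hmap' : ∀ g : BoundedContinuousFunction E ℝ,
      ∫ x, g x ∂μ'.map X' = ∫ ω, g (X' ω) ∂μ' := fun g ↦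
    integral_map hX' g.continuous.measurable.aestronglyMeasurable
  simp only [← hmap, ← hmap']
  exact ⟨fun h ↦ ProbabilityMeasure.tendsto_iff_forall_integral_tendsto.1 h.tendsto,
    fun h ↦ ⟨hX, hX', ProbabilityMeasure.tendsto_iff_forall_integral_tendsto.2 h⟩⟩

theorem tendstoInDistribution_of_forall_lipschitz_integral_tendsto [l.IsCountablyGenerated]
    [PseudoEMetricSpace E] [BorelSpace E] {X : ∀ i, Ω i → E} {X' : Ω' → E}
    (hX : ∀ i, AEMeasurable (X i) (μ i)) (hX' : AEMeasurable X' μ')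
    (h : ∀ g : E → ℝ, (∃ C, ∀ x y, dist (g x) (g y) ≤ C) → (∃ L, LipschitzWith L g) →
      Tendsto (fun i ↦ ∫ ω, g (X i ω) ∂μ i) l (𝓝 (∫ ω, g (X' ω) ∂μ'))) :
    TendstoInDistribution X l X' μ μ' := by
  refine ⟨hX, hX', tendsto_iff_forall_lipschitz_integral_tendsto.2 fun g hC hL ↦ ?_⟩
  have hg : Measurable g := hL.choose_spec.continuous.measurable
  simp only [ProbabilityMeasure.coe_mk, integral_map (hX _) hg.aestronglyMeasurable,
    integral_map hX' hg.aestronglyMeasurable]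
  exact h g hC hL

theorem dist_integral_comp_le {Ω : Type*} {m : MeasurableSpace Ω} {μ : Measure Ω}
    [IsProbabilityMeasure μ] [PseudoMetricSpace E] [SecondCountableTopology E]
    [OpensMeasurableSpace E] {X ξ : Ω → E} (hX : AEMeasurable X μ) (hξ : AEMeasurable ξ μ)
    {g : E → ℝ} {L : ℝ≥0} {C η : ℝ} (hL : LipschitzWith L g) (hC : ∀ x y, dist (g x) (g y) ≤ C)
    (hη : 0 ≤ η) (h : μ {ω | η < dist (X ω) (ξ ω)} ≤ ENNReal.ofReal η) :
    dist (∫ ω, g (X ω) ∂μ) (∫ ω, g (ξ ω) ∂μ) ≤ (L + C) * η := by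
  have hintegrable : ∀ {ζ : Ω → E}, AEMeasurable ζ μ → Integrable (fun ω ↦ g (ζ ω)) μ := by
    intro ζ hζ
    obtain ⟨ω₀⟩ := nonempty_of_isProbabilityMeasure μ
    refine .of_bound (hL.continuous.measurable.comp_aemeasurable hζ).aestronglyMeasurable
      (C + ‖g (ζ ω₀)‖) (ae_of_all _ fun ω ↦ ?_)
    have := norm_sub_norm_le (g (ζ ω)) (g (ζ ω₀))
    linarith [dist_eq_norm (g (ζ ω)) (g (ζ ω₀)) ▸ hC (ζ ω) (ζ ω₀)]
  set bad : Set Ω := {ω | η < dist (X ω) (ξ ω)}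
  have hbad : NullMeasurableSet bad μ := nullMeasurableSet_lt aemeasurable_const (hX.dist hξ)
  have hμbad : μ.real bad ≤ η := ENNReal.toReal_le_of_le_ofReal hη h
  have hpointwise : ∀ ω, ‖g (X ω) - g (ξ ω)‖ ≤ L * η + bad.indicator (fun _ ↦ C) ω := fun ω ↦ by
    rw [← dist_eq_norm]
    by_cases hω : ω ∈ bad
    · rw [indicator_of_mem hω]
      exact (hC _ _).trans (le_add_of_nonneg_left (by positivity))
    · rw [indicator_of_notMem hω, add_zero]
      exact (hL.dist_le_mul _ _).trans (by gcongr; exact not_lt.1 hω)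
  have hindicator : Integrable (bad.indicator fun _ ↦ C) μ := (integrable_const C).indicator₀ hbad
  have hC0 : 0 ≤ C := by
    obtain ⟨ω₀⟩ := nonempty_of_isProbabilityMeasure μ
    exact dist_nonneg.trans (hC (X ω₀) (X ω₀))
  calc dist (∫ ω, g (X ω) ∂μ) (∫ ω, g (ξ ω) ∂μ)
    _ = ‖∫ ω, g (X ω) - g (ξ ω) ∂μ‖ := by
        rw [dist_eq_norm, integral_sub (hintegrable hX) (hintegrable hξ)]
    _ ≤ ∫ ω, L * η + bad.indicator (fun _ ↦ C) ω ∂μ :=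
        norm_integral_le_of_norm_le ((integrable_const _).add hindicator) (ae_of_all _ hpointwise)
    _ = L * η + μ.real bad * C := by
        rw [integral_add (integrable_const _) hindicator, integral_indicator₀ hbad]
        simp
    _ ≤ (L + C) * η := by nlinarith

theorem tendstoInDistribution_of_forall_approx [l.IsCountablyGenerated] [PseudoMetricSpace E]
    [SecondCountableTopology E] [BorelSpace E] {X : ∀ i, Ω i → E} {X' : Ω' → E}
    (hX : ∀ i, AEMeasurable (X i) (μ i)) (hX' : AEMeasurable X' μ')
    (h : ∀ η : ℝ, 0 < η → ∃ (ξ : ∀ i, Ω i → E) (ξ' : Ω' → E),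
      TendstoInDistribution ξ l ξ' μ μ' ∧
      (∀ᶠ i in l, μ i {ω | η < dist (X i ω) (ξ i ω)} ≤ ENNReal.ofReal η) ∧
      μ' {ω | η < dist (X' ω) (ξ' ω)} ≤ ENNReal.ofReal η) :
    TendstoInDistribution X l X' μ μ' := by
  refine tendstoInDistribution_of_forall_lipschitz_integral_tendsto hX hX' ?_
  rintro g ⟨C, hC⟩ ⟨L, hL⟩
  obtain ⟨ω₀⟩ := nonempty_of_isProbabilityMeasure μ'
  have hC0 : 0 ≤ C := dist_nonneg.trans (hC (X' ω₀) (X' ω₀))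
  refine Metric.tendsto_nhds.2 fun r hr ↦ ?_
  set η : ℝ := r / (4 * (L + C + 1))
  have hη : 0 < η := by positivity
  have hηr : (L + C) * η ≤ r / 4 := by
    rw [mul_div_assoc', div_le_iff₀ (by positivity)]
    nlinarith
  obtain ⟨ξ, ξ', hξ, hXξ, hXξ'⟩ := h η hη
  let G := BoundedContinuousFunction.mkOfBound ⟨g, hL.continuous⟩ C hC
  have hG := (tendstoInDistribution_iff_forall_integral_tendsto hξ.forall_aemeasurable
    hξ.aemeasurable_limit).1 hξ G
  have hlimit := dist_integral_comp_le hX' hξ.aemeasurable_limit hL hC hη.le hXξ'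
  rw [dist_comm] at hlimit
  filter_upwards [hXξ, Metric.tendsto_nhds.1 hG (r / 4) (by positivity)] with i hi hGi
  have happrox := dist_integral_comp_le (hX i) (hξ.forall_aemeasurable i) hL hC hη.le hi
  have htriangle := dist_triangle4 (∫ ω, g (X i ω) ∂μ i) (∫ ω, g (ξ i ω) ∂μ i)
    (∫ ω, g (ξ' ω) ∂μ') (∫ ω, g (X' ω) ∂μ')
  have hGi' : dist (∫ ω, g (ξ i ω) ∂μ i) (∫ ω, g (ξ' ω) ∂μ') < r / 4 := hGi
  linarith

theorem tendstoInDistribution_of_tendsto_integral_pow {X : ∀ i, Ω i → ℝ} {X' : Ω' → ℝ} {R : ℝ}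
    (hX : ∀ i, AEMeasurable (X i) (μ i)) (hX' : AEMeasurable X' μ')
    (hR : ∀ i, ∀ᵐ ω ∂μ i, |X i ω| ≤ R) (hR' : ∀ᵐ ω ∂μ', |X' ω| ≤ R)
    (h : ∀ n : ℕ, Tendsto (fun i ↦ ∫ ω, X i ω ^ n ∂μ i) l (𝓝 (∫ ω, X' ω ^ n ∂μ'))) :
    TendstoInDistribution X l X' μ μ' := by
  refine (tendstoInDistribution_iff_forall_integral_tendsto hX hX').2 fun g ↦
    Metric.tendsto_nhds.2 fun r hr ↦ ?_
  obtain ⟨p, hp⟩ := exists_polynomial_near_of_continuousOn (-R) R g g.continuous.continuousOn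
    (r / 4) (by positivity)
  have hpoly : Tendsto (fun i ↦ ∫ ω, p.eval (X i ω) ∂μ i) l (𝓝 (∫ ω, p.eval (X' ω) ∂μ')) := by
    simp only [integral_eval_eq_sum (hX _) (hR _), integral_eval_eq_sum hX' hR']
    exact tendsto_finsetSum _ fun k _ ↦ (h k).const_mul _
  have hlimit := dist_integral_eval_le hX' hR' g hp
  filter_upwards [Metric.tendsto_nhds.1 hpoly (r / 4) (by positivity)] with i hi
  have happrox := dist_integral_eval_le (hX i) (hR i) g hp
  rw [dist_comm] at happrox
  have htriangle := dist_triangle4 (∫ ω, g (X i ω) ∂μ i) (∫ ω, p.eval (X i ω) ∂μ i)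
    (∫ ω, p.eval (X' ω) ∂μ') (∫ ω, g (X' ω) ∂μ')
  linarith

end TendstoInDistribution

section IntegratedProcess

variable {S : Type*} {mS : MeasurableSpace S} {ν : Measure S} {w : S → ℝ} {C : ℝ}

section Moments

variable {Ω : Type*} {m : MeasurableSpace Ω} {μ : Measure Ω} [IsProbabilityMeasure μ]
  {V : S → Ω → ℝ}

lemma measurable_integral_mul [SFinite ν] (hw : Measurable w) (hV : Measurable V.uncurry) :
    Measurable fun ω ↦ ∫ s, w s * V s ω ∂ν := by
  have : Measurable fun q : Ω × S ↦ w q.2 * V q.2 q.1 :=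
    (hw.comp measurable_snd).mul (hV.comp measurable_swap)
  exact this.stronglyMeasurable.integral_prod_right'.measurable

lemma abs_integral_mul_le (hw : Integrable w ν) (hC : ∀ s ω, |V s ω| ≤ C) (ω : Ω) :
    |∫ s, w s * V s ω ∂ν| ≤ C * ∫ s, |w s| ∂ν := by
  rw [← integral_const_mul]
  refine norm_integral_le_of_norm_le (f := fun s ↦ w s * V s ω) (hw.abs.const_mul C)
    (ae_of_all _ fun s ↦ ?_)
  rw [norm_mul, mul_comm]
  exact mul_le_mul_of_nonneg_right (hC s ω) (norm_nonneg _)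

lemma abs_prod_le_pow {κ : Type*} [Fintype κ] (hC : ∀ s ω, |V s ω| ≤ C) (s : κ → S) (ω : Ω) :
    |∏ j, V (s j) ω| ≤ C ^ Fintype.card κ := by
  rw [Finset.abs_prod]
  exact (Finset.prod_le_prod (fun _ _ ↦ abs_nonneg _) fun j _ ↦ hC (s j) ω).trans_eq (by simp)

lemma measurable_prod_comp {κ : Type*} [Fintype κ] (hV : Measurable V.uncurry) :
    Measurable fun q : (κ → S) × Ω ↦ ∏ j, V (q.1 j) q.2 :=
  Finset.measurable_fun_prod _ fun j _ ↦ hV.comp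
    (f := fun q : (κ → S) × Ω ↦ (q.1 j, q.2)) (by fun_prop)

lemma integral_pow_integral_mul [SigmaFinite ν] (hw : Integrable w ν) (hV : Measurable V.uncurry)
    (hC : ∀ s ω, |V s ω| ≤ C) (n : ℕ) :
    ∫ ω, (∫ s, w s * V s ω ∂ν) ^ n ∂μ =
      ∫ s : Fin n → S, (∏ j, w (s j)) * ∫ ω, ∏ j, V (s j) ω ∂μ ∂Measure.pi fun _ ↦ ν := by
  have hpow : ∀ ω, (∫ s, w s * V s ω ∂ν) ^ n =
      ∫ s : Fin n → S, (∏ j, w (s j)) * ∏ j, V (s j) ω ∂Measure.pi fun _ ↦ ν := fun ω ↦ by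
    simp only [← Finset.prod_mul_distrib]
    rw [integral_fintype_prod_eq_pow fun s ↦ w s * V s ω, Fintype.card_fin]
  have hint : Integrable (fun q : Ω × (Fin n → S) ↦ (∏ j, w (q.2 j)) * ∏ j, V (q.2 j) q.1)
      (μ.prod (Measure.pi fun _ ↦ ν)) := by
    refine ((Integrable.fintype_prod fun _ ↦ hw).comp_snd μ).mul_bdd (c := C ^ n)
      ((measurable_prod_comp hV).comp measurable_swap).aestronglyMeasurable (ae_of_all _ fun q ↦ ?_)
    exact (abs_prod_le_pow hC q.2 q.1).trans_eq (by simp)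
  simp only [hpow]
  rw [integral_integral_swap hint]
  simp only [integral_const_mul]

end Moments

variable {ι : Type*} {Ω : ι → Type*} {m : ∀ i, MeasurableSpace (Ω i)} {μ : ∀ i, Measure (Ω i)}
  [∀ i, IsProbabilityMeasure (μ i)] {Ω' : Type*} {m' : MeasurableSpace Ω'} {μ' : Measure Ω'}
  [IsProbabilityMeasure μ'] {l : Filter ι}

theorem tendstoInDistribution_integral_mul [l.IsCountablyGenerated] [SigmaFinite ν]
    {V : ∀ i, S → Ω i → ℝ} {V' : S → Ω' → ℝ} (hwm : Measurable w) (hw : Integrable w ν)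
    (hV : ∀ i, Measurable (V i).uncurry) (hV' : Measurable V'.uncurry)
    (hC : ∀ i s ω, |V i s ω| ≤ C) (hC' : ∀ s ω, |V' s ω| ≤ C)
    (h : ∀ n, ∀ᵐ s : Fin n → S ∂Measure.pi fun _ ↦ ν,
      Tendsto (fun i ↦ ∫ ω, ∏ j, V i (s j) ω ∂μ i) l (𝓝 (∫ ω, ∏ j, V' (s j) ω ∂μ'))) :
    TendstoInDistribution (fun i ω ↦ ∫ s, w s * V i s ω ∂ν) l (fun ω ↦ ∫ s, w s * V' s ω ∂ν)
      μ μ' := by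
  refine tendstoInDistribution_of_tendsto_integral_pow
    (fun i ↦ (measurable_integral_mul hwm (hV i)).aemeasurable)
    (measurable_integral_mul hwm hV').aemeasurable
    (fun i ↦ ae_of_all _ (abs_integral_mul_le hw (hC i)))
    (ae_of_all _ (abs_integral_mul_le hw hC')) fun n ↦ ?_
  simp only [integral_pow_integral_mul hw (hV _) (hC _), integral_pow_integral_mul hw hV' hC']
  refine tendsto_integral_filter_of_dominated_convergence (fun s ↦ C ^ n * ∏ j, ‖w (s j)‖)
    (Eventually.of_forall fun i ↦ ?_) (Eventually.of_forall fun i ↦ ae_of_all _ fun s ↦ ?_)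
    ((Integrable.fintype_prod fun _ ↦ hw.norm).const_mul _) ?_
  · have hprod : Measurable fun s : Fin n → S ↦ ∏ j, w (s j) := by fun_prop
    exact hprod.aestronglyMeasurable.mul
      (measurable_prod_comp (hV i)).stronglyMeasurable.integral_prod_right'.aestronglyMeasurable
  · rw [norm_mul, norm_prod, mul_comm]
    refine mul_le_mul_of_nonneg_right ?_ (Finset.prod_nonneg fun _ _ ↦ norm_nonneg _)
    refine (norm_integral_le_of_norm_le_const (C := C ^ n) (ae_of_all _ fun ω ↦ ?_)).trans (by simp)
    exact (abs_prod_le_pow (hC i) s ω).trans_eq (by simp)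
  · filter_upwards [h n] with s hs
    exact hs.const_mul _

end IntegratedProcess

lemma prod_eval_eq_sum {κ R : Type*} [Fintype κ] [DecidableEq κ] [CommSemiring R] (p : Polynomial R)
    (x : κ → R) :
    ∏ j, p.eval (x j) = ∑ φ ∈ Fintype.piFinset fun _ : κ ↦ Finset.range (p.natDegree + 1),
      (∏ j, p.coeff (φ j)) * ∏ j, x j ^ φ j := by
  simp only [Polynomial.eval_eq_sum_range, Finset.prod_univ_sum, Finset.prod_mul_distrib]

namespace IsBESQ

section PolynomialMoments

variable {Ω : Type*} {m : MeasurableSpace Ω} {μ : Measure Ω} {ℱ : Filtration ℝ m} {δ y : ℝ}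
  {Y : ℝ → Ω → ℝ} {κ : Type*} [Fintype κ]

lemma exp_neg_mem_Icc (hY : IsBESQ μ ℱ δ y Y) (s : ℝ) (ω : Ω) : Real.exp (-Y s ω) ∈ Icc 0 1 :=
  ⟨(Real.exp_pos _).le, Real.exp_le_one_iff.2 (neg_nonpos.2 (hY.nonneg s ω))⟩

lemma measurable_eval_exp_neg (hY : IsBESQ μ ℱ δ y Y) (p : Polynomial ℝ) :
    Measurable (Function.uncurry fun s ω ↦ p.eval (Real.exp (-Y s ω))) :=
  p.continuous.measurable.comp (Real.measurable_exp.comp hY.measurable_uncurry.neg)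

lemma integral_prod_eval_exp_neg [IsProbabilityMeasure μ] [DecidableEq κ] (hY : IsBESQ μ ℱ δ y Y)
    (p : Polynomial ℝ) (s : κ → ℝ) :
    ∫ ω, ∏ j, p.eval (Real.exp (-Y (s j) ω)) ∂μ =
      ∑ φ ∈ Fintype.piFinset fun _ : κ ↦ Finset.range (p.natDegree + 1),
        (∏ j, p.coeff (φ j)) * ∫ ω, ∏ q : Σ j, Fin (φ j), Real.exp (-Y (s q.1) ω) ∂μ := by
  simp only [prod_eval_eq_sum, Fintype.prod_sigma, Finset.prod_const, Finset.card_univ,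
    Fintype.card_fin, ← integral_const_mul]
  refine integral_finsetSum _ fun φ _ ↦ Integrable.const_mul (.of_bound ?_ 1 ?_) _
  · have := hY.measurable
    exact (by fun_prop : Measurable fun ω ↦ ∏ j, Real.exp (-Y (s j) ω) ^ φ j).aestronglyMeasurable
  · refine ae_of_all _ fun ω ↦ ?_
    rw [norm_prod]
    refine Finset.prod_le_one (fun _ _ ↦ norm_nonneg _) fun j _ ↦ ?_
    rw [norm_pow, Real.norm_of_nonneg (Real.exp_pos _).le]
    exact pow_le_one₀ (hY.exp_neg_mem_Icc _ _).1 (hY.exp_neg_mem_Icc _ _).2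

end PolynomialMoments

section Convergence

variable {ι : Type*} {l : Filter ι} {Ω : ι → Type*} {m : ∀ i, MeasurableSpace (Ω i)}
  {μ : ∀ i, Measure (Ω i)} [∀ i, IsProbabilityMeasure (μ i)] {ℱ : ∀ i, Filtration ℝ (m i)}
  {δ z : ℝ} {y : ι → ℝ} {Y : ∀ i, ℝ → Ω i → ℝ} {Ω' : Type*} {m' : MeasurableSpace Ω'}
  {μ' : Measure Ω'} [IsProbabilityMeasure μ'] {ℱ' : Filtration ℝ m'} {Z : ℝ → Ω' → ℝ}

lemma tendsto_integral_prod_eval_exp_neg (hY : ∀ i, IsBESQ (μ i) (ℱ i) δ (y i) (Y i))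
    (hZ : IsBESQ μ' ℱ' δ z Z) (hyz : Tendsto y l (𝓝 z)) {κ : Type*} [Fintype κ]
    (p : Polynomial ℝ) {s : κ → ℝ} (hs : ∀ j, 0 ≤ s j) :
    Tendsto (fun i ↦ ∫ ω, ∏ j, p.eval (Real.exp (-Y i (s j) ω)) ∂μ i) l
      (𝓝 (∫ ω, ∏ j, p.eval (Real.exp (-Z (s j) ω)) ∂μ')) := by
  classical
  simp only [(hY _).integral_prod_eval_exp_neg, hZ.integral_prod_eval_exp_neg]
  refine tendsto_finsetSum _ fun φ _ ↦ Tendsto.const_mul _ ?_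
  exact tendsto_integral_prod_exp_neg hY hZ hyz (s := fun q : Σ j, Fin (φ j) ↦ s q.1) fun q ↦ hs q.1

theorem tendstoInDistribution_intervalIntegral_mul_eval_exp_neg [l.IsCountablyGenerated]
    (hY : ∀ i, IsBESQ (μ i) (ℱ i) δ (y i) (Y i)) (hZ : IsBESQ μ' ℱ' δ z Z)
    (hyz : Tendsto y l (𝓝 z)) (p : Polynomial ℝ) {a b : ℝ} (ha : 0 ≤ a) (hab : a ≤ b) {w : ℝ → ℝ}
    (hwm : Measurable w) (hw : IntervalIntegrable w volume a b) :
    TendstoInDistribution (fun i ω ↦ ∫ s in a..b, w s * p.eval (Real.exp (-Y i s ω))) l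
      (fun ω ↦ ∫ s in a..b, w s * p.eval (Real.exp (-Z s ω))) μ μ' := by
  obtain ⟨C, hC⟩ := (isCompact_Icc (a := (0 : ℝ)) (b := 1)).exists_bound_of_continuousOn
    p.continuous.continuousOn
  simp only [intervalIntegral.integral_of_le hab]
  refine tendstoInDistribution_integral_mul (V := fun i s ω ↦ p.eval (Real.exp (-Y i s ω)))
    (V' := fun s ω ↦ p.eval (Real.exp (-Z s ω))) hwm hw.1
    (fun i ↦ (hY i).measurable_eval_exp_neg p) (hZ.measurable_eval_exp_neg p)
    (fun i s ω ↦ hC _ ((hY i).exp_neg_mem_Icc s ω)) (fun s ω ↦ hC _ (hZ.exp_neg_mem_Icc s ω))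
    fun n ↦ ?_
  have hnonneg : ∀ᵐ s ∂volume.restrict (Ioc a b), 0 ≤ s :=
    (ae_restrict_mem measurableSet_Ioc).mono fun s hs ↦ ha.trans hs.1.le
  have hpi : ∀ᵐ s : Fin n → ℝ ∂Measure.pi fun _ ↦ volume.restrict (Ioc a b), ∀ j, 0 ≤ s j :=
    ae_all_iff.2 fun j ↦ (Measure.tendsto_eval_ae_ae (i := j)).eventually hnonneg
  exact hpi.mono fun s hs ↦ tendsto_integral_prod_eval_exp_neg hY hZ hyz p hs

end Convergence

end IsBESQ

section PathApproximation

variable {α γ θ ρ ε κ s₀ : ℝ} {f : ℝ → ℝ} {p : Polynomial ℝ}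

lemma exists_polynomial_eval_exp_neg_near_rpow (hα : 0 ≤ α) (ρ : ℝ) (hκ : 0 < κ) :
    ∃ p : Polynomial ℝ, ∀ x ∈ Icc 0 ρ, |p.eval (Real.exp (-x)) - x ^ α| ≤ κ := by
  have hcont : ContinuousOn (fun u ↦ (-Real.log u) ^ α) (Icc (Real.exp (-ρ)) 1) :=
    (Real.continuous_rpow_const hα).comp_continuousOn
      (Real.continuousOn_log.mono fun _ hu ↦ ((Real.exp_pos _).trans_le hu.1).ne').neg
  obtain ⟨p, hp⟩ := exists_polynomial_near_of_continuousOn _ _ _ hcont κ hκ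
  refine ⟨p, fun x hx ↦ ?_⟩
  have hexp : Real.exp (-x) ∈ Icc (Real.exp (-ρ)) 1 :=
    ⟨Real.exp_le_exp.2 (neg_le_neg hx.2), Real.exp_le_one_iff.2 (neg_nonpos.2 hx.1)⟩
  simpa using (hp _ hexp).le

lemma rpow_mul_rpow_le {s x : ℝ} (hs : 0 < s) (hx : 0 ≤ x) (hα : 0 ≤ α) (hρ : 0 ≤ ρ)
    (hxs : x ≤ ρ * s ^ θ) : s ^ γ * x ^ α ≤ ρ ^ α * s ^ (γ + θ * α) := by
  calc s ^ γ * x ^ α ≤ s ^ γ * (ρ * s ^ θ) ^ α := by gcongr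
    _ = ρ ^ α * s ^ (γ + θ * α) := by
        rw [Real.mul_rpow hρ (by positivity), ← Real.rpow_mul hs.le, Real.rpow_add hs]
        ring

lemma norm_rpow_mul_rpow_le (hf0 : ∀ s, 0 ≤ f s) (hα : 0 ≤ α) (hρ : 0 ≤ ρ) (hs₀ : 0 ≤ s₀)
    (hgrowth : ∀ s ∈ Ioc s₀ 1, f s ≤ ρ * s ^ θ) {s : ℝ} (hs : s ∈ Ioc s₀ 1) :
    ‖s ^ γ * f s ^ α‖ ≤ ρ ^ α * s ^ (γ + θ * α) := by
  have hs0 : 0 < s := hs₀.trans_lt hs.1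
  have := hf0 s
  rw [Real.norm_of_nonneg (by positivity)]
  exact rpow_mul_rpow_le hs0 (hf0 s) hα hρ (hgrowth s hs)

lemma intervalIntegrable_rpow_mul_rpow (hf : Measurable f) (hf0 : ∀ s, 0 ≤ f s) (hα : 0 ≤ α)
    (hβ : -1 < γ + θ * α) (hρ : 0 ≤ ρ) (hs₀ : 0 ≤ s₀)
    (hgrowth : ∀ s ∈ Ioc s₀ 1, f s ≤ ρ * s ^ θ) {a b : ℝ} (ha : s₀ ≤ a) (hab : a ≤ b)
    (hb : b ≤ 1) : IntervalIntegrable (fun s ↦ s ^ γ * f s ^ α) volume a b := by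
  refine ((intervalIntegral.intervalIntegrable_rpow' hβ).const_mul (ρ ^ α)).mono_fun'
    (by fun_prop) ?_
  refine (ae_restrict_iff' measurableSet_uIoc).2 (ae_of_all _ fun s hs ↦ ?_)
  rw [uIoc_of_le hab] at hs
  exact norm_rpow_mul_rpow_le hf0 hα hρ hs₀ hgrowth ⟨ha.trans_lt hs.1, hs.2.trans hb⟩

lemma abs_intervalIntegral_rpow_mul_rpow_le (hf0 : ∀ s, 0 ≤ f s) (hα : 0 ≤ α)
    (hβ : -1 < γ + θ * α) (hρ : 0 ≤ ρ) (hs₀ : 0 ≤ s₀)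
    (hgrowth : ∀ s ∈ Ioc s₀ 1, f s ≤ ρ * s ^ θ) (hε : s₀ ≤ ε) (hε1 : ε ≤ 1) :
    |∫ s in s₀..ε, s ^ γ * f s ^ α| ≤ ρ ^ α * (ε ^ (γ + θ * α + 1) / (γ + θ * α + 1)) := by
  have hβ1 : 0 < γ + θ * α + 1 := by linarith
  calc |∫ s in s₀..ε, s ^ γ * f s ^ α| ≤ ∫ s in s₀..ε, ρ ^ α * s ^ (γ + θ * α) :=
        intervalIntegral.norm_integral_le_of_norm_le (f := fun s ↦ s ^ γ * f s ^ α) hε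
          (ae_of_all _ fun s hs ↦
            norm_rpow_mul_rpow_le hf0 hα hρ hs₀ hgrowth ⟨hs.1, hs.2.trans hε1⟩)
          ((intervalIntegral.intervalIntegrable_rpow' hβ).const_mul _)
    _ = ρ ^ α * ((ε ^ (γ + θ * α + 1) - s₀ ^ (γ + θ * α + 1)) / (γ + θ * α + 1)) := by
        rw [intervalIntegral.integral_const_mul, integral_rpow (Or.inl hβ)]
    _ ≤ ρ ^ α * (ε ^ (γ + θ * α + 1) / (γ + θ * α + 1)) := by
        gcongr
        exact sub_le_self _ (by positivity)

lemma intervalIntegrable_rpow_of_pos (γ : ℝ) {a b : ℝ} (ha : 0 < a) (hab : a ≤ b) :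
    IntervalIntegrable (fun s : ℝ ↦ s ^ γ) volume a b :=
  intervalIntegral.intervalIntegrable_rpow (Or.inr (by simp [uIcc_of_le hab, ha]))

lemma abs_intervalIntegral_sub_eval_exp_neg_le (hf : Continuous f) (hf0 : ∀ s, 0 ≤ f s)
    (hf1 : ∀ s ∈ Ioc ε 1, f s ≤ ρ) (hα : 0 ≤ α) (hε : 0 < ε) (hε1 : ε ≤ 1)
    (hp : ∀ x ∈ Icc 0 ρ, |p.eval (Real.exp (-x)) - x ^ α| ≤ κ) :
    |(∫ s in ε..1, s ^ γ * f s ^ α) - ∫ s in ε..1, s ^ γ * p.eval (Real.exp (-f s))| ≤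
      κ * ∫ s in ε..1, s ^ γ := by
  have hrpow := intervalIntegrable_rpow_of_pos γ hε hε1
  have hpoly : Continuous fun s ↦ p.eval (Real.exp (-f s)) := by fun_prop
  rw [← intervalIntegral.integral_sub
    (hrpow.mul_continuousOn (hf.rpow_const fun _ ↦ Or.inr hα).continuousOn)
    (hrpow.mul_continuousOn hpoly.continuousOn), ← intervalIntegral.integral_const_mul]
  refine intervalIntegral.norm_integral_le_of_norm_le
    (f := fun s ↦ s ^ γ * f s ^ α - s ^ γ * p.eval (Real.exp (-f s))) hε1
    (ae_of_all _ fun s hs ↦ ?_) (hrpow.const_mul κ)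
  have hs0 : 0 ≤ s ^ γ := Real.rpow_nonneg (hε.trans hs.1).le γ
  rw [← mul_sub, norm_mul, Real.norm_of_nonneg hs0, mul_comm, norm_sub_rev]
  exact mul_le_mul_of_nonneg_right (hp _ ⟨hf0 s, hf1 s hs⟩) hs0

lemma exists_pos_le_of_tendsto_zero {c β η : ℝ} (hβ : 0 < β) (hη : 0 < η) :
    ∃ ε ∈ Ioo (0 : ℝ) 1, c * (ε ^ β / β) ≤ η := by
  have hcont : ContinuousAt (fun ε : ℝ ↦ c * (ε ^ β / β)) 0 :=
    (((Real.continuous_rpow_const hβ.le).div_const β).const_mul c).continuousAt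
  have hlim : Tendsto (fun ε : ℝ ↦ c * (ε ^ β / β)) (𝓝[>] 0) (𝓝 0) := by
    simpa [Real.zero_rpow hβ.ne'] using hcont.tendsto.mono_left nhdsWithin_le_nhds
  obtain ⟨ε, hεη, hε⟩ :=
    ((hlim.eventually (ge_mem_nhds hη)).and (Ioo_mem_nhdsGT one_pos)).exists
  exact ⟨ε, hε, hεη⟩

theorem exists_forall_abs_intervalIntegral_sub_eval_exp_neg_le {η : ℝ} (hα : 0 ≤ α) (hθ : 0 ≤ θ)
    (hβ : -1 < γ + θ * α) (hρ : 0 ≤ ρ) (hη : 0 < η) :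
    ∃ ε ∈ Ioo (0 : ℝ) 1, ∃ p : Polynomial ℝ, ∀ s₀ ∈ Icc 0 ε, ∀ f : ℝ → ℝ, Continuous f →
      (∀ s, 0 ≤ f s) → (∀ s ∈ Ioc s₀ 1, f s ≤ ρ * s ^ θ) →
      |(∫ s in s₀..1, s ^ γ * f s ^ α) - ∫ s in ε..1, s ^ γ * p.eval (Real.exp (-f s))| ≤ η := by
  obtain ⟨ε, ⟨hε, hε1⟩, hsmall⟩ := exists_pos_le_of_tendsto_zero (c := ρ ^ α)
    (by linarith : 0 < γ + θ * α + 1) (half_pos hη)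
  set J := ∫ s in ε..1, s ^ γ
  have hJ : 0 ≤ J :=
    intervalIntegral.integral_nonneg hε1.le fun s hs ↦ Real.rpow_nonneg (hε.le.trans hs.1) γ
  obtain ⟨p, hp⟩ := exists_polynomial_eval_exp_neg_near_rpow hα ρ
    (by positivity : 0 < η / 2 / (J + 1))
  have hκJ : η / 2 / (J + 1) * J ≤ η / 2 := by
    rw [div_mul_eq_mul_div, div_le_iff₀ (by positivity)]
    nlinarith
  refine ⟨ε, ⟨hε, hε1⟩, p, fun s₀ hs₀ f hf hf0 hgrowth ↦ ?_⟩
  have hf1 : ∀ s ∈ Ioc ε 1, f s ≤ ρ := fun s hs ↦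
    (hgrowth s ⟨hs₀.2.trans_lt hs.1, hs.2⟩).trans
      (mul_le_of_le_one_right hρ (Real.rpow_le_one (hε.trans hs.1).le hs.2 hθ))
  have hintegrable {a b : ℝ} := intervalIntegrable_rpow_mul_rpow (a := a) (b := b) hf.measurable
    hf0 hα hβ hρ hs₀.1 hgrowth
  rw [← intervalIntegral.integral_add_adjacent_intervals (hintegrable le_rfl hs₀.2 hε1.le)
    (hintegrable hs₀.2 hε1.le le_rfl), add_sub_assoc]
  refine (abs_add_le _ _).trans ?_
  linarith [abs_intervalIntegral_rpow_mul_rpow_le hf0 hα hβ hρ hs₀.1 hgrowth hs₀.2 hε1.le,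
    abs_intervalIntegral_sub_eval_exp_neg_le (γ := γ) hf hf0 hf1 hα hε hε1.le hp]

end PathApproximation

lemma exists_lt_one_neg_one_lt_add_mul {α γ : ℝ} (h : -1 < γ + α) :
    ∃ θ ∈ Ioo (0 : ℝ) 1, -1 < γ + θ * α := by
  have hcont : ContinuousAt (fun θ : ℝ ↦ γ + θ * α) 1 := by fun_prop
  have hlim : Tendsto (fun θ : ℝ ↦ γ + θ * α) (𝓝[<] 1) (𝓝 (γ + α)) := by
    simpa using hcont.tendsto.mono_left nhdsWithin_le_nhds
  obtain ⟨θ, hθα, hθ⟩ := ((hlim.eventually (lt_mem_nhds h)).and (Ioo_mem_nhdsLT one_pos)).exists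
  exact ⟨θ, hθ, hθα⟩

lemma exists_div_sq_le (c : ℝ) {η : ℝ} (hη : 0 < η) : ∃ ρ : ℝ, 0 < ρ ∧ c / ρ ^ 2 ≤ η := by
  have hlim : Tendsto (fun ρ : ℝ ↦ c / ρ ^ 2) atTop (𝓝 0) :=
    tendsto_const_nhds.div_atTop (tendsto_pow_atTop two_ne_zero)
  exact ((eventually_gt_atTop 0).and (hlim.eventually (ge_mem_nhds hη))).exists

namespace IsBESQ

section GrowthEvent

variable {Ω : Type*} {m : MeasurableSpace Ω} {μ : Measure Ω} {ℱ : Filtration ℝ m} {δ y : ℝ}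
  {Y : ℝ → Ω → ℝ}

lemma measurable_intervalIntegral_rpow_mul_rpow (hY : IsBESQ μ ℱ δ y Y) (α γ a b : ℝ) :
    Measurable fun ω ↦ ∫ s in a..b, s ^ γ * Y s ω ^ α := by
  have hYα : Measurable (Function.uncurry fun s ω ↦ Y s ω ^ α) :=
    hY.measurable_uncurry.pow_const α
  have hrpow : Measurable fun s : ℝ ↦ s ^ γ := measurable_id.pow_const γ
  exact (measurable_integral_mul hrpow hYα).sub (measurable_integral_mul hrpow hYα)

lemma measure_lt_dist_le [IsProbabilityMeasure μ] {K s₀ θ ρ η : ℝ} (hY : IsBESQ μ ℱ δ y Y)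
    (hK : 0 ≤ K) (hs₀ : 0 ≤ s₀) (hy : y ≤ K * s₀) (hθ : 0 ≤ θ) (hθ1 : θ < 1) (hρ : 0 < ρ)
    (hρη : growthConst δ K θ / ρ ^ 2 ≤ η) {F G : (ℝ → ℝ) → ℝ}
    (h : ∀ f : ℝ → ℝ, Continuous f → (∀ s, 0 ≤ f s) → (∀ s ∈ Ioc s₀ 1, f s ≤ ρ * s ^ θ) →
      |F f - G f| ≤ η) :
    μ {ω | η < dist (F (Y · ω)) (G (Y · ω))} ≤ ENNReal.ofReal η := by
  have hsubset : {ω | η < dist (F (Y · ω)) (G (Y · ω))} ⊆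
      {ω | ∃ u ∈ Ioc s₀ 1, ρ * u ^ θ < Y u ω} := fun ω hω ↦ by
    by_contra hgrowth
    refine (h (Y · ω) (hY.cont ω) (hY.nonneg · ω) fun s hs ↦ ?_).not_gt hω
    exact not_lt.1 fun hlt ↦ hgrowth ⟨s, hs, hlt⟩
  exact (measure_mono hsubset).trans ((hY.measure_exists_mul_rpow_lt_le hK hs₀ hy hθ hθ1 hρ).trans
    (ENNReal.ofReal_le_ofReal hρη))

end GrowthEvent

variable {ι : Type*} {l : Filter ι} {Ω : ι → Type*} {m : ∀ i, MeasurableSpace (Ω i)}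
  {μ : ∀ i, Measure (Ω i)} [∀ i, IsProbabilityMeasure (μ i)] {ℱ : ∀ i, Filtration ℝ (m i)}
  {δ K α γ : ℝ} {y s₀ : ι → ℝ} {Y : ∀ i, ℝ → Ω i → ℝ} {Ω' : Type*} {m' : MeasurableSpace Ω'}
  {μ' : Measure Ω'} [IsProbabilityMeasure μ'] {ℱ' : Filtration ℝ m'} {Z : ℝ → Ω' → ℝ}

theorem tendstoInDistribution_intervalIntegral_rpow_mul_rpow [l.IsCountablyGenerated]
    (hY : ∀ i, IsBESQ (μ i) (ℱ i) δ (y i) (Y i)) (hZ : IsBESQ μ' ℱ' δ 0 Z) (hK : 0 ≤ K)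
    (hs₀ : ∀ i, 0 ≤ s₀ i) (hlim : Tendsto s₀ l (𝓝 0)) (hy : ∀ i, y i ≤ K * s₀ i) (hα : 0 ≤ α)
    (hγ : -1 < γ + α) :
    TendstoInDistribution (fun i ω ↦ ∫ s in s₀ i..1, s ^ γ * Y i s ω ^ α) l
      (fun ω ↦ ∫ s in (0 : ℝ)..1, s ^ γ * Z s ω ^ α) μ μ' := by
  have hy0 : Tendsto y l (𝓝 0) := squeeze_zero (fun i ↦ (hY i).start_nonneg) hy
    (by simpa using hlim.const_mul K)
  refine tendstoInDistribution_of_forall_approx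
    (fun i ↦ ((hY i).measurable_intervalIntegral_rpow_mul_rpow α γ _ _).aemeasurable)
    (hZ.measurable_intervalIntegral_rpow_mul_rpow α γ 0 1).aemeasurable fun η hη ↦ ?_
  obtain ⟨θ, ⟨hθ, hθ1⟩, hβ⟩ := exists_lt_one_neg_one_lt_add_mul hγ
  obtain ⟨ρ, hρ, hρη⟩ := exists_div_sq_le (growthConst δ K θ) hη
  obtain ⟨ε, ⟨hε, hε1⟩, p, happrox⟩ :=
    exists_forall_abs_intervalIntegral_sub_eval_exp_neg_le hα hθ.le hβ hρ.le hη
  refine ⟨_, _, tendstoInDistribution_intervalIntegral_mul_eval_exp_neg hY hZ hy0 p hε.le hε1.le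
    (measurable_id.pow_const γ) (intervalIntegrable_rpow_of_pos γ hε hε1.le), ?_, ?_⟩
  · filter_upwards [hlim.eventually (ge_mem_nhds hε)] with i hi
    exact (hY i).measure_lt_dist_le hK (hs₀ i) (hy i) hθ.le hθ1 hρ hρη (happrox _ ⟨hs₀ i, hi⟩)
  · exact hZ.measure_lt_dist_le hK le_rfl (by simp) hθ.le hθ1 hρ hρη (happrox 0 ⟨le_rfl, hε.le⟩)

end IsBESQ

theorem stmt_14_general {Ω : Type*} {m : MeasurableSpace Ω} (μ : Measure Ω)
    [IsProbabilityMeasure μ] (ℱ : Filtration ℝ m) (δ y : ℝ) (Y : ℝ → Ω → ℝ)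
    (hY : IsBESQ μ ℱ δ y Y) {Ω' : Type*} {m' : MeasurableSpace Ω'} (μ' : Measure Ω')
    [IsProbabilityMeasure μ'] (ℱ' : Filtration ℝ m') (Ytil : ℝ → Ω' → ℝ)
    (hYtil : IsBESQ μ' ℱ' δ 0 Ytil) (α γ : ℝ) (hα : 0 ≤ α) (hγ : -1 < γ + α) :
    ∀ g : BoundedContinuousFunction ℝ ℝ,
      Tendsto
        (fun t : ℝ ↦ ∫ ω, g ((∫ s in (1 : ℝ)..t, s ^ γ * Y s ω ^ α) / t ^ (1 + γ + α)) ∂μ)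
        atTop
        (𝓝 (∫ ω', g (∫ s in (0 : ℝ)..1, s ^ γ * Ytil s ω' ^ α) ∂μ')) := by
  intro g
  have hpos : ∀ t : ℝ, 0 < max t 1 := fun t ↦ one_pos.trans_le (le_max_right t 1)
  have hlim : Tendsto (fun t : ℝ ↦ (max t 1)⁻¹) atTop (𝓝 0) :=
    tendsto_inv_atTop_zero.comp (tendsto_atTop_mono (le_max_left · 1) tendsto_id)
  have hconv := IsBESQ.tendstoInDistribution_intervalIntegral_rpow_mul_rpow
    (fun t ↦ hY.rescale (hpos t)) hYtil hY.start_nonneg (fun t ↦ (inv_pos.2 (hpos t)).le) hlim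
    (fun t ↦ (div_eq_mul_inv y _).le) hα hγ
  refine ((tendstoInDistribution_iff_forall_integral_tendsto hconv.forall_aemeasurable
    hconv.aemeasurable_limit).1 hconv g).congr' ?_
  filter_upwards [eventually_ge_atTop 1] with t ht
  simp only [max_eq_left ht, hY.intervalIntegral_div_rpow_eq (one_pos.trans_le ht)]

/-- Convergence in distribution is expressed by testing against all bounded
continuous functions. -/
theorem stmt_14 {Ω : Type*} {m : MeasurableSpace Ω} (μ : Measure Ω) [IsProbabilityMeasure μ]
    (ℱ : Filtration ℝ m) (δ y : ℝ) (hδ : 0 < δ) (hy : 0 ≤ y)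
    (Y : ℝ → Ω → ℝ) (hY : IsBESQ μ ℱ δ y Y)
    {Ω' : Type*} {m' : MeasurableSpace Ω'} (μ' : Measure Ω') [IsProbabilityMeasure μ']
    (ℱ' : Filtration ℝ m') (Ytil : ℝ → Ω' → ℝ) (hYtil : IsBESQ μ' ℱ' δ 0 Ytil)
    (α γ : ℝ) (hα : 0 ≤ α) (hγ : -α < γ) :
    ∀ g : BoundedContinuousFunction ℝ ℝ,
      Tendsto
        (fun t : ℝ => ∫ ω, g ((∫ s in (1:ℝ)..t, s ^ γ * (Y s ω) ^ α) / t ^ (1 + γ + α)) ∂μ)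
        atTop
        (nhds (∫ ω', g (∫ s in (0:ℝ)..1, s ^ γ * (Ytil s ω') ^ α) ∂μ')) :=
  stmt_14_general μ ℱ δ y Y hY μ' ℱ' Ytil hYtil α γ hα (by linarith)
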